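/- Let A be a Lie conformal algebra and M an A-module endowed with a commutative associative product such that ∂^M and all a_λ (a ∈ A) act by derivations. The maps ψ^•: Γ^•(A,M) → C̄^•(A,M) ⊆ C^•(A,M) and χ₁: C₁(A,M) → Γ₁(A,M) define a morphism of 𝔤-complexes: χ₁ is a Lie algebra homomorphism ΠC₁ → ΠΓ₁ (which factors through a Lie algebra isomorphism ΠC̄₁ ≅ ΠΓ₁ when A decomposes), and for all x ∈ C₁ and γ ∈ Γ^•: ψ(δγ) = d(ψγ), ψ(ι_{χ₁(x)}γ) = ι_x(ψγ), and ψ(L_{χ₁(x)}γ) = L_x(ψγ). If A decomposes, as an 𝔽[∂]-module, into a direct sum of its torsion and a free submodule, then ψ^•: Γ^•(A,M) → C̄^•(A,M) is an isomorphism of ΠC₁ ≅ ΠΓ₁-complexes. -/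

import Mathlib

namespace LCC

/-! ### Index utilities -/

/-- Skip one index: the increasing enumeration of `{0,…,k} \ {i}`. -/
def skip1 (i r : ℕ) : ℕ := if r < i then r else r + 1

/-- Skip two indices `i < j`: the increasing enumeration of `{0,…,k+1} \ {i,j}`. -/
def skip2 (i j r : ℕ) : ℕ := if r < i then r else if r + 1 < j then r + 1 else r + 2

/-- Remove the `i`-th entry of a tuple. -/
def rm1 {α : Type*} {k : ℕ} (i : ℕ) (a : Fin (k+1) → α) : Fin k → α :=
  fun r => a ⟨skip1 i r.1, by have := r.2; unfold skip1; split <;> omega⟩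

/-- Remove the `i`-th and `j`-th entries (for `i < j`) of a tuple. -/
def rm2 {α : Type*} {k : ℕ} (i j : ℕ) (a : Fin (k+2) → α) : Fin k → α :=
  fun r => a ⟨skip2 i j r.1, by
    have := r.2; unfold skip2; split
    · omega
    · split <;> omega⟩

/-- Total weight of a multi-index. -/
def wt {k : ℕ} (ν : Fin k → ℕ) : ℕ := ∑ r, ν r

/-- The multinomial coefficient `(|m| + s)! / (∏ mᵣ! · s!)`. -/
def mnom {K : ℕ} (m : Fin K → ℕ) (s : ℕ) : ℕ :=
  (wt m + s).factorial / ((∏ r, (m r).factorial) * s.factorial)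

variable (F : Type*) [Field F]

/-- A Lie conformal algebra over `F`: an `F[∂]`-module `A` (given by the linear
endomorphism `D`), together with a `λ`-bracket recorded through its coefficients:
`[a_λ b] = ∑ₙ (br a b n) λⁿ`, satisfying sesquilinearity, skew-symmetry and the
Jacobi identity (all written in terms of coefficients of the `λ`-expansions). -/
structure LCA (A : Type*) [AddCommGroup A] [Module F A] where
  D : A →ₗ[F] A
  br : A →ₗ[F] A →ₗ[F] (ℕ → A)
  br_fin : ∀ a b, (Function.support (br a b)).Finite
  sesq_left_zero : ∀ a b, br (D a) b 0 = 0
  sesq_left : ∀ a b n, br (D a) b (n+1) = - br a b n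
  sesq_right : ∀ a b n, br a (D b) n
      = D (br a b n) + (if n = 0 then 0 else br a b (n-1))
  skew : ∀ a b m, br a b m
      = - ∑ᶠ n, ((-1 : F)^n * (n.choose m : F)) • ((D ^ (n - m)) (br b a n))
  jacobi : ∀ a b c m n,
      br a (br b c n) m - br b (br a c m) n
        = ∑ j ∈ Finset.range (m+1), (((n+j).choose j : F)) • br (br a b (m-j)) c (n+j)

/-- A module over a Lie conformal algebra: an `F[∂]`-module `M` with a `λ`-action
of `A`, given through the coefficients `a_λ v = ∑ₙ (act a v n) λⁿ`, satisfying
sesquilinearity and the Jacobi identity. -/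
structure LCAMod {A : Type*} [AddCommGroup A] [Module F A] (L : LCA F A)
    (M : Type*) [AddCommGroup M] [Module F M] where
  D : M →ₗ[F] M
  act : A →ₗ[F] M →ₗ[F] (ℕ → M)
  act_fin : ∀ a m, (Function.support (act a m)).Finite
  sesq_left_zero : ∀ a m, act (L.D a) m 0 = 0
  sesq_left : ∀ a m n, act (L.D a) m (n+1) = - act a m n
  sesq_right : ∀ a m n, act a (D m) n
      = D (act a m n) + (if n = 0 then 0 else act a m (n-1))
  jacobi : ∀ a b v p q,
      act a (act b v q) p - act b (act a v p) q
        = ∑ j ∈ Finset.range (p+1), (((q+j).choose j : F)) • act (L.br a b (p-j)) v (q+j)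

variable {F}
variable {A M : Type*} [AddCommGroup A] [Module F A] [AddCommGroup M] [Module F M]

/-- Torsion elements of the `F[∂]`-module `A`. -/
def IsTor (L : LCA F A) (x : A) : Prop :=
  ∃ p : Polynomial F, p ≠ 0 ∧ Polynomial.aeval L.D p x = 0

/-- `A` decomposes, as an `F[∂]`-module, into the direct sum of its torsion and
a free complementary submodule `F[∂] ⊗ U`. -/
def Decomposes (L : LCA F A) : Prop :=
  ∃ U : Submodule F A, Function.Bijective
    (fun p : {x : A // IsTor L x} × (ℕ →₀ U) =>
      (p.1 : A) + p.2.sum (fun n u => (L.D ^ n) (u : A)))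

variable {L : LCA F A}

/-- The condition for a coefficient family
`γ : A^{⊗ k} → F[λ₁,…,λ_k] ⊗ M` (recorded via the coefficients
`γ a ν` of `λ^ν`) to be a basic `k`-cochain: `F`-multilinearity, polynomiality,
sesquilinearity (A1) and skew-symmetry (A2). -/
structure IsGamma (R : LCAMod F L M) (k : ℕ)
    (γ : (Fin k → A) → (Fin k → ℕ) → M) : Prop where
  map_add : ∀ (a : Fin k → A) (i : Fin k) (x y : A),
    γ (Function.update a i (x + y)) = γ (Function.update a i x) + γ (Function.update a i y)
  map_smul : ∀ (a : Fin k → A) (i : Fin k) (r : F) (x : A),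
    γ (Function.update a i (r • x)) = r • γ (Function.update a i x)
  fin : ∀ a, (Function.support (γ a)).Finite
  sesq : ∀ (a : Fin k → A) (i : Fin k) (x : A) (ν : Fin k → ℕ),
    γ (Function.update a i (L.D x)) ν
      = (if ν i = 0 then 0 else - γ (Function.update a i x) (Function.update ν i (ν i - 1)))
  skew : ∀ (a : Fin k → A) (ν : Fin k → ℕ) (σ : Equiv.Perm (Fin k)),
    γ (a ∘ σ) (ν ∘ σ) = ((Equiv.Perm.sign σ : ℤˣ) : ℤ) • γ a ν

/-- The action of `∂` on basic cochains: `(∂γ) = (∂^M + λ₁ + ⋯ + λ_k) ∘ γ`,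
in terms of coefficients. -/
def GammaD (R : LCAMod F L M) {k : ℕ} (γ : (Fin k → A) → (Fin k → ℕ) → M) :
    (Fin k → A) → (Fin k → ℕ) → M :=
  fun a ν => R.D (γ a ν)
    + ∑ i : Fin k, (if ν i = 0 then 0 else γ a (Function.update ν i (ν i - 1)))

/-- Substitution of the auxiliary variable `μ` by
`λ† = −λ₁ − ⋯ − λ_K − ∂^M` (with `∂^M` moved to the left) in a polynomial
`q` in `λ₁,…,λ_K, μ`, recorded through its coefficients `q ρ n` of `λ^ρ μ^n`.
The result is the coefficient of `λ^ν`. -/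
noncomputable def substDag {K : ℕ} (DM : M →ₗ[F] M)
    (q : (Fin K → ℕ) → ℕ → M) (ν : Fin K → ℕ) : M :=
  ∑ ρ ∈ Finset.Iic ν, ∑ᶠ s : ℕ,
    (((-1 : F)^(wt (fun r => ν r - ρ r) + s)) * (mnom (fun r => ν r - ρ r) s : F)) •
      ((DM ^ s) (q ρ (wt (fun r => ν r - ρ r) + s)))

/-- The condition for a coefficient family
`c : A^{⊗(k+1)} → F[λ₁,…,λ_k] ⊗ M` to be a `(k+1)`-`λ`-bracket
(an element of `C^{k+1}(A,M)`), i.e. conditions B1, B2, B3 of the paper,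
written in terms of the coefficients `c a ν` of `λ^ν`. -/
structure IsCBr (R : LCAMod F L M) (k : ℕ)
    (c : (Fin (k+1) → A) → (Fin k → ℕ) → M) : Prop where
  map_add : ∀ (a : Fin (k+1) → A) (i : Fin (k+1)) (x y : A),
    c (Function.update a i (x + y)) = c (Function.update a i x) + c (Function.update a i y)
  map_smul : ∀ (a : Fin (k+1) → A) (i : Fin (k+1)) (r : F) (x : A),
    c (Function.update a i (r • x)) = r • c (Function.update a i x)
  fin : ∀ a, (Function.support (c a)).Finite
  sesq₁ : ∀ (a : Fin (k+1) → A) (i : Fin k) (x : A) (ν : Fin k → ℕ),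
    c (Function.update a i.castSucc (L.D x)) ν
      = (if ν i = 0 then 0
         else - c (Function.update a i.castSucc x) (Function.update ν i (ν i - 1)))
  sesq₂ : ∀ (a : Fin (k+1) → A) (x : A) (ν : Fin k → ℕ),
    c (Function.update a (Fin.last k) (L.D x)) ν
      = R.D (c (Function.update a (Fin.last k) x) ν)
        + ∑ i : Fin k, (if ν i = 0 then 0
            else c (Function.update a (Fin.last k) x) (Function.update ν i (ν i - 1)))
  skew : ∀ (a : Fin (k+1) → A) (ν : Fin k → ℕ) (σ : Equiv.Perm (Fin (k+1))),
    c a ν = ((Equiv.Perm.sign σ : ℤˣ) : ℤ) • substDag R.D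
      (fun ρ n =>
        if (Fin.snoc ρ n : Fin (k+1) → ℕ) (σ (Fin.last k)) = 0 then
          c (a ∘ σ) (fun i : Fin k => (Fin.snoc ρ n : Fin (k+1) → ℕ) (σ i.castSucc))
        else 0) ν

/-- The subspace `C̄`: poly-`λ`-brackets vanishing whenever one of the arguments is
a torsion element of `A`. -/
def VanishOnTorsion (L : LCA F A) {k : ℕ}
    (c : (Fin (k+1) → A) → (Fin k → ℕ) → M) : Prop :=
  ∀ a ν, (∃ i, IsTor L (a i)) → c a ν = 0

/-- The differential `d : C⁰ = M/∂M → C¹`, `(d∫m)(a) = a_{−∂^M} m`. -/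
noncomputable def dZero (R : LCAMod F L M) (m : M) :
    (Fin 1 → A) → (Fin 0 → ℕ) → M :=
  fun a _ => ∑ᶠ n, ((-1 : F)^n) • ((R.D ^ n) (R.act (a 0) m n))

/-- The second term of the differential `d` of the complex of
poly-`λ`-brackets (the double sum over `i < j` in the paper's formula). -/
noncomputable def dPair (L : LCA F A) (R : LCAMod F L M) :
    ∀ {k : ℕ}, ((Fin (k+1) → A) → (Fin k → ℕ) → M) →
      (Fin (k+2) → A) → (Fin (k+1) → ℕ) → M
  | 0, _, _, _ => 0
  | (s+1), c, a, ν =>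
    ∑ i : Fin (s+2), ∑ j : Fin (s+2),
      if i < j then
        ((-1 : F)^(s + i.1 + j.1 + 1)) •
          ∑ p ∈ Finset.range (ν i + 1),
            substDag R.D
              (fun ρ n =>
                if ρ i = 0 ∧ ρ j = 0 then
                  c (Fin.snoc (Fin.snoc (rm2 i.1 j.1 (Fin.init a)) (a (Fin.last (s+2))))
                      (L.br (a i.castSucc) (a j.castSucc) p))
                    (Fin.snoc (rm2 i.1 j.1 ρ) n)
                else 0)
              (Function.update ν i (ν i - p))
      else 0

/-- The differential `d` on the complex `C^•(A,M)` of poly-`λ`-brackets,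
written in terms of coefficients (formula (1.8) of the paper). Here `c` is a
`(k+1)`-`λ`-bracket and `dRaw c` is a `(k+2)`-`λ`-bracket. -/
noncomputable def dRaw (L : LCA F A) (R : LCAMod F L M) {k : ℕ}
    (c : (Fin (k+1) → A) → (Fin k → ℕ) → M) :
    (Fin (k+2) → A) → (Fin (k+1) → ℕ) → M :=
  fun a ν =>
    (∑ i : Fin (k+1), ((-1 : F)^i.1) •
        R.act (a i.castSucc) (c (rm1 i.1 a) (rm1 i.1 ν)) (ν i))
    + dPair L R c a ν
    + ((-1 : F)^(k+1)) • substDag R.D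
        (fun ρ n =>
          if ρ (Fin.last k) = 0 then
            R.act (a (Fin.last (k+1))) (c (Fin.init a) (Fin.init ρ)) n
          else 0) ν
    + ∑ i : Fin (k+1), ((-1 : F)^(i.1+1)) •
        c (Fin.snoc (rm1 i.1 (Fin.init a)) (L.br (a i.castSucc) (a (Fin.last (k+1))) (ν i)))
          (rm1 i.1 ν)

/-- The second term of the differential `δ` of the basic complex
`Γ̃^•(A,M)` (the double sum over `i < j`). -/
noncomputable def deltaPair (L : LCA F A) (R : LCAMod F L M) :
    ∀ {k : ℕ}, ((Fin k → A) → (Fin k → ℕ) → M) →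
      (Fin (k+1) → A) → (Fin (k+1) → ℕ) → M
  | 0, _, _, _ => 0
  | (s+1), γ, a, ν =>
    ∑ i : Fin (s+2), ∑ j : Fin (s+2),
      if i < j then
        ((-1 : F)^(s + i.1 + j.1)) •
          ∑ p ∈ Finset.range (ν i + 1),
            ((((ν i - p) + ν j).choose (ν i - p) : F)) •
              γ (Fin.snoc (rm2 i.1 j.1 a) (L.br (a i) (a j) p))
                (Fin.snoc (rm2 i.1 j.1 ν) ((ν i - p) + ν j))
      else 0

/-- The differential `δ` of the basic Lie conformal algebra cohomology complex
`Γ̃^•(A,M)`, written in terms of coefficients of the `λ`-expansions. -/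
noncomputable def deltaRaw (L : LCA F A) (R : LCAMod F L M) {k : ℕ}
    (γ : (Fin k → A) → (Fin k → ℕ) → M) :
    (Fin (k+1) → A) → (Fin (k+1) → ℕ) → M :=
  fun a ν =>
    (∑ i : Fin (k+1), ((-1 : F)^i.1) •
        R.act (a i) (γ (rm1 i.1 a) (rm1 i.1 ν)) (ν i))
    + deltaPair L R γ a ν

/-- The map `ψ^{k+1} : Γ̃^{k+1}(A,M) → C^{k+1}(A,M)`,
`{a₁ λ₁ ⋯ a_k λ_k a_{k+1}}_{ψ(γ)} = γ_{λ₁,…,λ_k,λ†}(a₁,…,a_{k+1})`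
where `λ† = −λ₁ − ⋯ − λ_k − ∂^M` (with `∂^M` moved to the left). -/
noncomputable def psiRaw (R : LCAMod F L M) {k : ℕ}
    (γ : (Fin (k+1) → A) → (Fin (k+1) → ℕ) → M) :
    (Fin (k+1) → A) → (Fin k → ℕ) → M :=
  fun a ν => substDag R.D (fun ρ n => γ a (Fin.snoc ρ n)) ν

/-- The map `χ` on "polynomial duals": given
`φ : Hom(F[λ₁,…,λ_K], M)` (recorded through its values `φ ν` on monomials),
`chiMap DM φ` is `φ ∘ (substitution λ_{K+1} ↦ −λ₁ − ⋯ − λ_K + ∂^M)`,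
with `∂^M` moved to the left. -/
noncomputable def chiMap {K : ℕ} (DM : M →ₗ[F] M) (φ : (Fin K → ℕ) → M) :
    (Fin (K+1) → ℕ) → M :=
  fun ν =>
    ∑ m ∈ Finset.Iic (fun _ : Fin K => ν (Fin.last K)),
      if wt m ≤ ν (Fin.last K) then
        (((-1 : F)^(wt m)) * (mnom m (ν (Fin.last K) - wt m) : F)) •
          ((DM ^ (ν (Fin.last K) - wt m)) (φ (fun r => Fin.init ν r + m r)))
      else 0

section Product

variable (F) {N : Type*} [CommRing N] [Algebra F N]

/-- The exterior multiplication of basic cochains, in coefficient form. -/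
noncomputable def wedge {h k : ℕ}
    (α : (Fin h → A) → (Fin h → ℕ) → N) (β : (Fin k → A) → (Fin k → ℕ) → N) :
    (Fin (h+k) → A) → (Fin (h+k) → ℕ) → N :=
  fun a ν =>
    ((h.factorial * k.factorial : F))⁻¹ •
      ∑ σ : Equiv.Perm (Fin (h+k)),
        ((Equiv.Perm.sign σ : ℤˣ) : ℤ) •
          (α (fun i => a (σ (Fin.castAdd k i))) (fun i => ν (σ (Fin.castAdd k i))) *
           β (fun i => a (σ (Fin.natAdd h i))) (fun i => ν (σ (Fin.natAdd h i))))

/-- Contraction of a basic cochain by (a generator of) a basic `h`-chain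
`b ⊗ φ ∈ A^{⊗h} ⊗ Hom(F[λ₁,…,λ_h], N)`. -/
noncomputable def iotaG {h k : ℕ} (b : Fin h → A) (φ : (Fin h → ℕ) → N)
    (γ : (Fin (h + k) → A) → (Fin (h + k) → ℕ) → N) :
    (Fin k → A) → (Fin k → ℕ) → N :=
  fun a ν => ∑ᶠ ρ : Fin h → ℕ, φ ρ * γ (Fin.append b a) (Fin.append ρ ν)

/-- The action of `∂` on (generators of) the space of basic `h`-chains:
`∂(a ⊗ φ) = a ⊗ ((−λ₁^* − ⋯ − λ_h^* + ∂)φ)`. -/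
def chainD (R : LCAMod F L N) {h : ℕ} (φ : (Fin h → ℕ) → N) : (Fin h → ℕ) → N :=
  fun ρ => R.D (φ ρ) - ∑ i : Fin h, φ (Function.update ρ i (ρ i + 1))

/-- Contraction by a basic 1-chain `a₀ ⊗ m(x)`, where `m(x) = ∑ m_k x^k` is recorded
by its coefficient function `m : ℕ → N` (formula (3.23) of the paper, using the
pairing `⟨x^p, λ^q⟩ = q! δ_{p,q}`). -/
noncomputable def iota1 {k : ℕ} (a₀ : A) (m : ℕ → N)
    (γ : (Fin (k+1) → A) → (Fin (k+1) → ℕ) → N) : (Fin k → A) → (Fin k → ℕ) → N :=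
  fun a ν => ∑ᶠ q : ℕ, (q.factorial : F) • (m q * γ (Fin.cons a₀ a) (Fin.cons q ν))

/-- The Lie derivative `L_ξ = δ ∘ ι_ξ + ι_ξ ∘ δ` along a basic 1-chain. -/
noncomputable def lie1 (R : LCAMod F L N) {k : ℕ} (a₀ : A) (m : ℕ → N)
    (γ : (Fin (k+1) → A) → (Fin (k+1) → ℕ) → N) : (Fin (k+1) → A) → (Fin (k+1) → ℕ) → N :=
  deltaRaw L R (iota1 F a₀ m γ) + iota1 F a₀ m (deltaRaw L R γ)

end Product

end LCC

namespace LCC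

open scoped TensorProduct

variable (F : Type*) [Field F] {A : Type*} [AddCommGroup A] [Module F A]
  {N : Type*} [CommRing N] [Algebra F N] {L : LCA F A}

/-- Coefficient series of `(∂_x^p m)(x) · n(x)`. -/
noncomputable def g1ser (m n : ℕ → N) (p : ℕ) : ℕ → N :=
  fun k => ∑ i ∈ Finset.range (k+1), (((i+p).descFactorial p) • m (i+p)) * n (k-i)

/-- Coefficient series of `⟨m(x₁), b_{λ₁} n(x)⟩`, with `⟨x^p, λ^q⟩ = q! δ_{p,q}`. -/
noncomputable def pairSer (R : LCAMod F L N) (m : ℕ → N) (b₀ : A) (n : ℕ → N) : ℕ → N :=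
  fun k => ∑ᶠ q : ℕ, (q.factorial : F) • (m q * R.act b₀ (n k) q)

/-- `∂_x` on `N[[x]]` in coefficient form. -/
noncomputable def derX : (ℕ → N) →ₗ[F] (ℕ → N) where
  toFun m := fun k => (k + 1 : F) • m (k+1)
  map_add' := by intro x y; funext k; simp [smul_add]
  map_smul' := by intro r x; funext k; simp; rw [smul_comm]

/-- `∂^M` acting coefficientwise on `N[[x]]`. -/
noncomputable def coefD (R : LCAMod F L N) : (ℕ → N) →ₗ[F] (ℕ → N) where
  toFun m := fun k => R.D (m k)
  map_add' := by intro x y; funext k; simp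
  map_smul' := by intro r x; funext k; simp

/-- The relation operator `∂ ⊗ 1 + 1 ⊗ ∂_x` on `A ⊗ N[[x]]`. -/
noncomputable def chainRel (L : LCA F A) (N : Type*) [CommRing N] [Algebra F N] :
    (A ⊗[F] (ℕ → N)) →ₗ[F] (A ⊗[F] (ℕ → N)) :=
  LinearMap.rTensor (ℕ → N) L.D + LinearMap.lTensor A (derX F)

/-- `Γ̃₁(A,N) = (A ⊗ N[[x]])/(∂⊗1 + 1⊗∂_x)(A ⊗ N[[x]])`. -/
noncomputable abbrev Gamma1 (L : LCA F A) (N : Type*) [CommRing N] [Algebra F N] :=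
  (A ⊗[F] (ℕ → N)) ⧸ LinearMap.range (chainRel F L N)

/-- The Lie bracket of two generators of `Γ̃₁`. -/
noncomputable def brkGen (R : LCAMod F L N) (a : A) (m : ℕ → N) (b : A) (n : ℕ → N) :
    A ⊗[F] (ℕ → N) :=
  (∑ᶠ p : ℕ, (L.br a b p) ⊗ₜ[F] (g1ser m n p))
    - a ⊗ₜ[F] (pairSer F R n b m) + b ⊗ₜ[F] (pairSer F R m a n)

/-- The operator `∂` on `A ⊗ N[[x]]`: `∂(a ⊗ m(x)) = a ⊗ (∂^M − ∂_x)m(x)`. -/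
noncomputable def chainPartial (R : LCAMod F L N) :
    (A ⊗[F] (ℕ → N)) →ₗ[F] (A ⊗[F] (ℕ → N)) :=
  LinearMap.lTensor A (coefD F R - derX F)

/-- The relation operator `∂` on `A ⊗ M`, so that `C₁ = (A⊗M)/∂(A⊗M)`. -/
noncomputable def c1Rel (L : LCA F A) (R : LCAMod F L N) :
    (A ⊗[F] N) →ₗ[F] (A ⊗[F] N) :=
  LinearMap.rTensor N L.D + LinearMap.lTensor A R.D

/-- `C₁(A,N) = (A ⊗ N)/∂(A ⊗ N)`. -/
noncomputable abbrev C1Q (L : LCA F A) (R : LCAMod F L N) :=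
  (A ⊗[F] N) ⧸ LinearMap.range (c1Rel F L R)

/-- `e^{x ∂^M} m` as a power series. -/
noncomputable def expSer (R : LCAMod F L N) : N →ₗ[F] (ℕ → N) where
  toFun m := fun k => (k.factorial : F)⁻¹ • ((R.D ^ k) m)
  map_add' := by intro x y; funext k; simp
  map_smul' := by intro r x; funext k; simp; rw [smul_comm]

/-- `χ₁ : A ⊗ M → A ⊗ M[[x]]`, `a ⊗ m ↦ a ⊗ e^{x∂^M} m`, on raw chains. -/
noncomputable def chi1Raw (R : LCAMod F L N) : (A ⊗[F] N) →ₗ[F] (A ⊗[F] (ℕ → N)) :=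
  LinearMap.lTensor A (expSer F R)

/-- The Lie bracket of two generators of `ΠC₁`:
`[a⊗m, b⊗n] = [a_{∂^M₁} b]_→ ⊗ mn + b ⊗ (a_{∂^M} n)_→ m − a ⊗ (b_{∂^M} m)_→ n`. -/
noncomputable def brkC1Gen (R : LCAMod F L N) (a : A) (m : N) (b : A) (n : N) :
    A ⊗[F] N :=
  (∑ᶠ p : ℕ, (L.br a b p) ⊗ₜ[F] (((R.D ^ p) m) * n))
    + b ⊗ₜ[F] (∑ᶠ q : ℕ, R.act a n q * ((R.D ^ q) m))
    - a ⊗ₜ[F] (∑ᶠ q : ℕ, R.act b m q * ((R.D ^ q) n))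

/-- Contraction of `c ∈ C^{k+2}(A,M)` by a 1-chain `a₀ ⊗ m ∈ C₁`. -/
noncomputable def iotaC1 {k : ℕ} (R : LCAMod F L N) (a₀ : A) (m : N)
    (c : (Fin (k+2) → A) → (Fin (k+1) → ℕ) → N) :
    (Fin (k+1) → A) → (Fin k → ℕ) → N :=
  fun a ν => ∑ᶠ p : ℕ, c (Fin.cons a₀ a) (Fin.cons p ν) * ((R.D ^ p) m)

/-- Contraction `ι_{a₀⊗m} : C¹ → C⁰`, `ι_{a₀⊗m} c = ∫ m·c(a₀)`. -/
noncomputable def iotaC1zero (R : LCAMod F L N) (a₀ : A) (m : N)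
    (c : (Fin 1 → A) → (Fin 0 → ℕ) → N) : N :=
  m * c (fun _ => a₀) (fun i => i.elim0)

/-- The Lie derivative `L_x = d∘ι_x + ι_x∘d` on `C^{k+2}`. -/
noncomputable def lieC1 {k : ℕ} (R : LCAMod F L N) (a₀ : A) (m : N)
    (c : (Fin (k+2) → A) → (Fin (k+1) → ℕ) → N) :
    (Fin (k+2) → A) → (Fin (k+1) → ℕ) → N :=
  dRaw L R (iotaC1 F R a₀ m c) + iotaC1 F R a₀ m (dRaw L R c)

end LCC

/-! Division of a polynomial in `λ₁, …, λ_k` by `∂^M + λ₁ + ⋯ + λ_k`, monic in `λ_k`, leaves a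
remainder that does not involve `λ_k`. This remainder is the value at `λ_k = λ_k†`, so that the
kernel of `ψ` is `∂Γ̃`. Each of the operators from which `δ` and the contraction with `χ₁(a ⊗ m)`
are built is compatible with multiplication by `∂^M + λ₁ + ⋯ + λ_k`, so that `ψ` can be computed
after replacing its argument by the remainder; comparing with `d` and `ι` is then immediate.

If `A` decomposes, every `a ∈ A` has an expansion `∑ₙ ∂ⁿ uₙ` modulo torsion. To lift a poly
`λ`-bracket that vanishes on torsion along `ψ`, one regards it as a polynomial in one more variable,
makes it sesquilinear by expanding one argument after the other, and antisymmetrizes the result.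

The exponential series `e^{x∂^M} m` are the solutions of `∂ₓ f = ∂^M f`, hence `Γ₁ = Ker ∂` is
reached by `χ₁` as soon as one-chains have representatives on which `∂` can be computed before
passing to the quotient. The expansion modulo torsion provides them, because torsion elements do not
contribute to `Γ̃₁`: in characteristic `0` a nonzero polynomial in `∂ₓ` is surjective on `M[[x]]`.
-/

namespace LCC

/-! ### Polynomials in `λ₁, …, λ_K` as coefficient families -/

/-- Formal power series in variables `λᵢ`, `i ∈ ι`, with coefficients in `M`, given by their
coefficient functions; polynomials are the elements of `polyCoeffs`. -/
abbrev Coeffs (ι M : Type*) := (ι → ℕ) → M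

section Operators

variable {F : Type*} [Field F] {M : Type*} [AddCommGroup M] [Module F M] {ι : Type*}

open Classical in
variable (F M ι) in
/-- Multiplication by the monomial `λ^m`, as a representation of the monoid of exponents `m`. -/
noncomputable def mulMonomial : Multiplicative (ι → ℕ) →* Module.End F (Coeffs ι M) where
  toFun m :=
    { toFun f ν := if m.toAdd ≤ ν then f (ν - m.toAdd) else 0
      map_add' f g := by funext ν; simp only [Pi.add_apply]; split_ifs <;> simp
      map_smul' r f := by
        funext ν; simp only [Pi.smul_apply, RingHom.id_apply]; split_ifs <;> simp }
  map_one' := by ext f ν; simp [zero_le]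
  map_mul' m n := by
    ext f ν
    have h : m.toAdd + n.toAdd ≤ ν ↔ m.toAdd ≤ ν ∧ n.toAdd ≤ ν - m.toAdd :=
      ⟨fun h ↦ ⟨le_self_add.trans h, le_tsub_of_add_le_left h⟩,
        fun h ↦ (add_le_add_right h.2 _).trans (add_tsub_cancel_of_le h.1).le⟩
    simp [h, ite_and, tsub_add_eq_tsub_tsub]

open Classical in
lemma mulMonomial_apply (m : ι → ℕ) (f : Coeffs ι M) (ν : ι → ℕ) :
    mulMonomial F M ι (.ofAdd m) f ν = if m ≤ ν then f (ν - m) else 0 :=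
  rfl

variable [DecidableEq ι]

variable (F) in
/-- Multiplication by the variable `λᵢ`. -/
noncomputable def lam (i : ι) : Module.End F (Coeffs ι M) :=
  mulMonomial F M ι (.ofAdd (Pi.single i 1))

lemma lam_pow (i : ι) (p : ℕ) :
    (lam F i ^ p : Module.End F (Coeffs ι M)) = mulMonomial F M ι (.ofAdd (Pi.single i p)) := by
  rw [lam, ← map_pow, ← ofAdd_nsmul, ← Pi.single_smul, smul_eq_mul, mul_one]

lemma lam_pow_apply (i : ι) (p : ℕ) (f : Coeffs ι M) (ν : ι → ℕ) :
    (lam F i ^ p) f ν = if p ≤ ν i then f (Function.update ν i (ν i - p)) else 0 := by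
  have hle : Pi.single i p ≤ ν ↔ p ≤ ν i := by
    simp [Pi.single, update_le_iff]
  have hsub : ν - Pi.single i p = Function.update ν i (ν i - p) := by
    ext r
    obtain rfl | hr := eq_or_ne r i <;> simp [*]
  simp [lam_pow, mulMonomial_apply, hle, hsub]

lemma lam_apply (i : ι) (f : Coeffs ι M) (ν : ι → ℕ) :
    lam F i f ν = if ν i = 0 then 0 else f (Function.update ν i (ν i - 1)) := by
  simpa [Nat.one_le_iff_ne_zero, ite_not] using lam_pow_apply (F := F) i 1 f ν

lemma commute_lam_lam (i j : ι) : Commute (lam F i : Module.End F (Coeffs ι M)) (lam F j) :=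
  (Commute.all _ _).map (mulMonomial F M ι)

lemma commute_compLeft_lam (D : M →ₗ[F] M) (i : ι) : Commute (D.compLeft (ι → ℕ)) (lam F i) := by
  ext f ν
  simp [lam_apply, apply_ite D]

lemma compLeft_pow (D : M →ₗ[F] M) (X : Type*) (s : ℕ) :
    D.compLeft X ^ s = (D ^ s).compLeft X := by
  induction s with
  | zero => rfl
  | succ s ih => rw [pow_succ, ih, pow_succ]; rfl

variable [Fintype ι]

/-- The operator `∂^M + ∑ᵢ λᵢ`. -/
noncomputable def totalD (D : M →ₗ[F] M) : Module.End F (Coeffs ι M) :=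
  (∑ i, lam F i) + D.compLeft _

/-- The operator `λ† = -∂^M - ∑ᵢ λᵢ` that is substituted for the last variable. -/
noncomputable def dag (D : M →ₗ[F] M) : Module.End F (Coeffs ι M) :=
  -totalD D

lemma totalD_apply (D : M →ₗ[F] M) (f : Coeffs ι M) :
    totalD D f = (∑ i, lam F i f) + D.compLeft _ f := by
  simp [totalD]

lemma commute_lam_dag (D : M →ₗ[F] M) (i : ι) : Commute (lam F i) (dag D) :=
  ((Commute.sum_right _ _ _ fun j _ ↦ commute_lam_lam i j).add_right
    (commute_compLeft_lam D i).symm).neg_right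

lemma noncommProd_lam_pow (m : ι → ℕ)
    (hc : ((Finset.univ : Finset ι) : Set ι).Pairwise
      (Function.onFun Commute fun i ↦ (lam F i : Module.End F (Coeffs ι M)) ^ m i)) :
    Finset.univ.noncommProd (fun i ↦ lam F i ^ m i) hc = mulMonomial F M ι (.ofAdd m) := by
  rw [Finset.noncommProd_congr rfl (fun i _ ↦ lam_pow i (m i)),
    ← Finset.map_noncommProd Finset.univ (fun i ↦ Multiplicative.ofAdd (Pi.single i (m i)))
      (fun _ _ _ _ _ ↦ Commute.all _ _), Finset.noncommProd_eq_prod, ← ofAdd_sum,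
    Finset.univ_sum_single]

/-! ### Substitution of `λ†` for the last variable -/

open Classical in
lemma sum_lam_pow_apply {K : ℕ} (j : ℕ) (f : Coeffs (Fin K) M) (ν : Fin K → ℕ) :
    ((∑ i, lam F i) ^ j) f ν = ∑ m ∈ Finset.Iic ν,
      if wt m = j then (Nat.multinomial Finset.univ m : F) • f (ν - m) else 0 := by
  have hterm (m : Fin K → ℕ) : ((Nat.multinomial Finset.univ m : Module.End F (Coeffs (Fin K) M))
      * mulMonomial F M (Fin K) (.ofAdd m)) f ν
        = if m ≤ ν then (Nat.multinomial Finset.univ m : F) • f (ν - m) else 0 := by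
    rw [Module.End.mul_apply, Module.End.natCast_apply, Pi.smul_apply, mulMonomial_apply, smul_ite,
      smul_zero, Nat.cast_smul_eq_nsmul]
  have hset : {m ∈ Finset.Iic ν | wt m = j} =
      {m ∈ (Finset.univ : Finset (Fin K)).piAntidiag j | m ≤ ν} := by
    ext m
    rw [Finset.mem_filter, Finset.mem_filter, Finset.mem_Iic, Finset.mem_piAntidiag, wt]
    simp [and_comm]
  rw [Finset.sum_pow_eq_sum_piAntidiag_of_commute _ _ (fun i _ j _ _ ↦ commute_lam_lam i j)]
  simp only [noncommProd_lam_pow, LinearMap.sum_apply, Finset.sum_apply, hterm,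
    ← Finset.sum_filter, hset]

lemma mnom_eq_choose_mul_multinomial {K : ℕ} (m : Fin K → ℕ) (s : ℕ) :
    mnom m s = (wt m + s).choose (wt m) * Nat.multinomial Finset.univ m := by
  refine Nat.div_eq_of_eq_mul_left (by positivity) ?_
  rw [← Nat.add_choose_mul_factorial_mul_factorial, wt, ← Nat.multinomial_spec,
    ← Nat.choose_symm_add]
  ring

lemma dag_pow_apply {K : ℕ} (D : M →ₗ[F] M) (n : ℕ) (f : Coeffs (Fin K) M) (ν : Fin K → ℕ) :
    (dag D ^ n) f ν = ∑ m ∈ Finset.Iic ν, if wt m ≤ n then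
      ((-1 : F) ^ n * (mnom m (n - wt m) : F)) • (D ^ (n - wt m)) (f (ν - m)) else 0 := by
  have hterm : ∀ j ∈ Finset.range (n + 1),
      ((∑ i, lam F i) ^ j * D.compLeft _ ^ (n - j) *
          (n.choose j : Module.End F (Coeffs (Fin K) M)) : Module.End F (Coeffs (Fin K) M)) f ν
        = ∑ m ∈ Finset.Iic ν, if wt m = j then
            (mnom m (n - wt m) : F) • (D ^ (n - wt m)) (f (ν - m)) else 0 := by
    intro j hj
    rw [Module.End.mul_apply, Module.End.mul_apply, Module.End.natCast_apply, map_nsmul, map_nsmul,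
      Pi.smul_apply, sum_lam_pow_apply, Finset.smul_sum, compLeft_pow]
    refine Finset.sum_congr rfl fun m _ ↦ ?_
    split_ifs with hm
    · subst hm
      rw [LinearMap.compLeft_apply, Function.comp_apply, mnom_eq_choose_mul_multinomial,
        Nat.add_sub_cancel' (Finset.mem_range_succ_iff.1 hj), ← Nat.cast_smul_eq_nsmul F, smul_smul,
        Nat.cast_mul]
    · rw [smul_zero]
  have hcomm : Commute (∑ i, lam F i) (D.compLeft (Fin K → ℕ)) :=
    Commute.sum_left _ _ _ fun i _ ↦ (commute_compLeft_lam D i).symm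
  rw [dag, totalD, ← neg_one_smul F, smul_pow, hcomm.add_pow, LinearMap.smul_apply,
    LinearMap.sum_apply, Pi.smul_apply, Finset.sum_apply, Finset.sum_congr rfl hterm,
    Finset.sum_comm, Finset.smul_sum]
  simp only [Finset.sum_ite_eq, Finset.mem_range_succ_iff, smul_ite, smul_zero, mul_smul]

lemma substDag_eq_sum_dag_pow {K : ℕ} (D : M →ₗ[F] M) {q : (Fin K → ℕ) → ℕ → M} {N : ℕ}
    (hq : ∀ ρ n, N ≤ n → q ρ n = 0) :
    substDag D q = ∑ n ∈ Finset.range N, (dag D ^ n) (fun ρ ↦ q ρ n) := by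
  funext ν
  simp only [Finset.sum_apply, dag_pow_apply, substDag]
  rw [Finset.sum_comm]
  refine Finset.sum_bij' (fun ρ _ ↦ ν - ρ) (fun m _ ↦ ν - m) (by simp) (by simp)
    (fun ρ h ↦ tsub_tsub_cancel_of_le (Finset.mem_Iic.1 h))
    (fun ρ h ↦ tsub_tsub_cancel_of_le (Finset.mem_Iic.1 h)) fun ρ h ↦ ?_
  change ∑ᶠ s : ℕ, ((-1 : F) ^ (wt (ν - ρ) + s) * (mnom (ν - ρ) s : F)) •
    (D ^ s) (q ρ (wt (ν - ρ) + s)) = _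
  rw [tsub_tsub_cancel_of_le (Finset.mem_Iic.1 h), ← Finset.sum_filter,
    finsum_eq_sum_of_support_subset (s := Finset.range (N - wt (ν - ρ)))]
  · refine Finset.sum_bij' (fun s _ ↦ wt (ν - ρ) + s) (fun n _ ↦ n - wt (ν - ρ)) ?_ ?_ ?_ ?_ ?_
      <;> simp <;> lia
  · intro s hs
    by_contra hsN
    exact hs (by simp [hq ρ (wt (ν - ρ) + s) (by simp at hsN; lia)])

end Operators

section LastVariable

variable {F : Type*} [Field F] {M : Type*} [AddCommGroup M] [Module F M]

variable (F M) in
/-- The polynomials `F[λᵢ : i ∈ ι] ⊗ M` among the formal power series. -/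
def polyCoeffs (ι : Type*) : Submodule F (Coeffs ι M) where
  carrier := {f | (Function.support f).Finite}
  add_mem' hf hg := (hf.union hg).subset (Function.support_add _ _)
  zero_mem' := by simp
  smul_mem' r f hf := hf.subset (Function.support_const_smul_subset r f)

lemma mem_polyCoeffs {ι : Type*} {f : Coeffs ι M} :
    f ∈ polyCoeffs F M ι ↔ (Function.support f).Finite :=
  Iff.rfl

lemma mem_polyCoeffs_iff_bddAbove {ι : Type*} [Finite ι] {f : Coeffs ι M} :
    f ∈ polyCoeffs F M ι ↔ BddAbove (Function.support f) := by
  classical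
  have := Fintype.ofFinite ι
  exact Set.finite_iff_bddAbove

lemma mulMonomial_mem_polyCoeffs {ι : Type*} {f : Coeffs ι M} (hf : f ∈ polyCoeffs F M ι)
    (m : Multiplicative (ι → ℕ)) : mulMonomial F M ι m f ∈ polyCoeffs F M ι := by
  classical
  refine (hf.image (m.toAdd + ·)).subset fun ν hν ↦ ?_
  rw [Function.mem_support, ← ofAdd_toAdd m, mulMonomial_apply] at hν
  obtain ⟨hm, h⟩ := ite_ne_right_iff.1 hν
  exact ⟨_, h, add_tsub_cancel_of_le hm⟩

lemma lam_mem_polyCoeffs {ι : Type*} [DecidableEq ι] {f : Coeffs ι M} (hf : f ∈ polyCoeffs F M ι)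
    (i : ι) : lam F i f ∈ polyCoeffs F M ι :=
  mulMonomial_mem_polyCoeffs hf _

lemma compLeft_mem_polyCoeffs {ι N : Type*} [AddCommGroup N] [Module F N] {f : Coeffs ι M}
    (hf : f ∈ polyCoeffs F M ι) (T : M →ₗ[F] N) : T.compLeft _ f ∈ polyCoeffs F N ι :=
  hf.subset (Function.support_comp_subset (map_zero T) f)

lemma totalD_mem_polyCoeffs {ι : Type*} [Fintype ι] [DecidableEq ι] {f : Coeffs ι M}
    (hf : f ∈ polyCoeffs F M ι) (D : M →ₗ[F] M) : totalD D f ∈ polyCoeffs F M ι := by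
  rw [totalD_apply]
  exact add_mem (sum_mem fun i _ ↦ lam_mem_polyCoeffs hf i) (compLeft_mem_polyCoeffs hf D)

lemma dag_mem_polyCoeffs {ι : Type*} [Fintype ι] [DecidableEq ι] {f : Coeffs ι M}
    (hf : f ∈ polyCoeffs F M ι) (D : M →ₗ[F] M) : dag D f ∈ polyCoeffs F M ι :=
  neg_mem (totalD_mem_polyCoeffs hf D)

variable {K : ℕ}

variable (F) in
/-- The coefficient of `μ^n`, where `μ` is the last variable. -/
def lastCoeff (n : ℕ) : Coeffs (Fin (K + 1)) M →ₗ[F] Coeffs (Fin K) M :=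
  LinearMap.funLeft F M fun ρ ↦ Fin.snoc ρ n

lemma lastCoeff_apply (n : ℕ) (f : Coeffs (Fin (K + 1)) M) (ρ : Fin K → ℕ) :
    lastCoeff F n f ρ = f (Fin.snoc ρ n) :=
  rfl

lemma ext_lastCoeff {f g : Coeffs (Fin (K + 1)) M}
    (h : ∀ n, lastCoeff F n f = lastCoeff F n g) : f = g := by
  funext ν
  rw [← Fin.snoc_init_self ν]
  exact congr_fun (h _) _

lemma lastCoeff_mem_polyCoeffs {f : Coeffs (Fin (K + 1)) M} (hf : f ∈ polyCoeffs F M _) (n : ℕ) :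
    lastCoeff F n f ∈ polyCoeffs F M _ :=
  (mem_polyCoeffs.1 hf).preimage (Function.LeftInverse.injective (g := Fin.init)
    fun ρ : Fin K → ℕ ↦ Fin.init_snoc (α := fun _ ↦ ℕ) n ρ).injOn

lemma eventually_lastCoeff_eq_zero {f : Coeffs (Fin (K + 1)) M} (hf : f ∈ polyCoeffs F M _) :
    ∃ N, ∀ n, N ≤ n → lastCoeff F n f = 0 := by
  obtain ⟨B, hB⟩ := mem_polyCoeffs_iff_bddAbove.1 hf
  refine ⟨B (Fin.last K) + 1, fun n hn ↦ funext fun ρ ↦ ?_⟩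
  by_contra hρ
  have : (Fin.snoc ρ n : Fin (K + 1) → ℕ) (Fin.last K) ≤ B (Fin.last K) := hB hρ (Fin.last K)
  rw [Fin.snoc_last] at this
  lia

lemma lastCoeff_lam_castSucc (n : ℕ) (i : Fin K) (f : Coeffs (Fin (K + 1)) M) :
    lastCoeff F n (lam F i.castSucc f) = lam F i (lastCoeff F n f) := by
  funext ρ
  simp [lastCoeff_apply, lam_apply]

lemma lastCoeff_succ_lam_last (n : ℕ) (f : Coeffs (Fin (K + 1)) M) :
    lastCoeff F (n + 1) (lam F (Fin.last K) f) = lastCoeff F n f := by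
  funext ρ
  simp [lastCoeff_apply, lam_apply, Fin.update_snoc_last]

lemma lastCoeff_zero_lam_last (f : Coeffs (Fin (K + 1)) M) :
    lastCoeff F 0 (lam F (Fin.last K) f) = 0 := by
  funext ρ
  simp [lastCoeff_apply, lam_apply]

lemma lastCoeff_totalD (D : M →ₗ[F] M) (n : ℕ) (f : Coeffs (Fin (K + 1)) M) :
    lastCoeff F n (totalD D f)
      = lastCoeff F n (lam F (Fin.last K) f) - dag D (lastCoeff F n f) := by
  have hD : lastCoeff F n (D.compLeft _ f) = D.compLeft _ (lastCoeff F n f) := rfl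
  simp only [totalD_apply, Fin.sum_univ_castSucc, map_add, map_sum, lastCoeff_lam_castSucc, hD, dag,
    LinearMap.neg_apply]
  abel

/-- A polynomial not involving `λ_K` regarded as a polynomial in one more variable. -/
def constLast : Coeffs (Fin K) M →ₗ[F] Coeffs (Fin (K + 1)) M where
  toFun f ν := if ν (Fin.last K) = 0 then f (Fin.init ν) else 0
  map_add' f g := by funext ν; simp only [Pi.add_apply]; split_ifs <;> simp
  map_smul' r f := by
    funext ν; simp only [Pi.smul_apply, RingHom.id_apply]; split_ifs <;> simp

lemma constLast_apply (f : Coeffs (Fin K) M) (ν : Fin (K + 1) → ℕ) :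
    constLast (F := F) f ν = if ν (Fin.last K) = 0 then f (Fin.init ν) else 0 :=
  rfl

lemma lastCoeff_constLast (n : ℕ) (f : Coeffs (Fin K) M) :
    lastCoeff F n (constLast (F := F) f) = if n = 0 then f else 0 := by
  funext ρ
  rw [lastCoeff_apply, constLast_apply, Fin.snoc_last, Fin.init_snoc]
  split_ifs <;> rfl

lemma constLast_mem_polyCoeffs {f : Coeffs (Fin K) M} (hf : f ∈ polyCoeffs F M _) :
    constLast (F := F) f ∈ polyCoeffs F M _ := by
  refine ((mem_polyCoeffs.1 hf).image fun ρ ↦ Fin.snoc ρ 0).subset fun ν hν ↦ ?_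
  obtain ⟨hlast, h⟩ := ite_ne_right_iff.1 (Function.mem_support.1 hν)
  exact ⟨_, h, hlast ▸ Fin.snoc_init_self ν⟩

lemma lam_last_constLast (D : M →ₗ[F] M) (f : Coeffs (Fin K) M) :
    lam F (Fin.last K) (constLast (F := F) f)
      = constLast (F := F) (dag D f) + totalD D (constLast (F := F) f) := by
  refine ext_lastCoeff (F := F) fun n ↦ ?_
  rw [map_add, lastCoeff_totalD, lastCoeff_constLast, lastCoeff_constLast]
  split_ifs <;> simp

lemma commute_lam_totalD {ι : Type*} [Fintype ι] [DecidableEq ι] (D : M →ₗ[F] M) (i : ι) :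
    Commute (lam F i) (totalD D) :=
  Commute.neg_right_iff.1 (commute_lam_dag D i)

/-- The value `f(λ₁, …, λ_K, λ†)` of a polynomial `f` in `λ₁, …, λ_K, μ`. -/
noncomputable def lastSubst (D : M →ₗ[F] M) (f : Coeffs (Fin (K + 1)) M) : Coeffs (Fin K) M :=
  substDag D fun ρ n ↦ f (Fin.snoc ρ n)

lemma lastSubst_eq_sum (D : M →ₗ[F] M) {f : Coeffs (Fin (K + 1)) M} {N : ℕ}
    (hN : ∀ n, N ≤ n → lastCoeff F n f = 0) :
    lastSubst D f = ∑ n ∈ Finset.range N, (dag D ^ n) (lastCoeff F n f) :=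
  substDag_eq_sum_dag_pow D fun ρ n hn ↦ congr_fun (hN n hn) ρ

variable (D : M →ₗ[F] M) {f g : Coeffs (Fin (K + 1)) M}

lemma lastSubst_add (hf : f ∈ polyCoeffs F M _) (hg : g ∈ polyCoeffs F M _) :
    lastSubst D (f + g) = lastSubst D f + lastSubst D g := by
  obtain ⟨N, hN⟩ := eventually_lastCoeff_eq_zero hf
  obtain ⟨P, hP⟩ := eventually_lastCoeff_eq_zero hg
  rw [lastSubst_eq_sum D fun n hn ↦ hN n (le_of_max_le_left hn),
    lastSubst_eq_sum D fun n hn ↦ hP n (le_of_max_le_right hn),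
    lastSubst_eq_sum (N := max N P) D, ← Finset.sum_add_distrib]
  · simp only [map_add]
  · intro n hn
    rw [map_add, hN n (le_of_max_le_left hn), hP n (le_of_max_le_right hn), add_zero]

lemma lastSubst_smul (r : F) (hf : f ∈ polyCoeffs F M _) :
    lastSubst D (r • f) = r • lastSubst D f := by
  obtain ⟨N, hN⟩ := eventually_lastCoeff_eq_zero hf
  rw [lastSubst_eq_sum D hN, lastSubst_eq_sum (N := N) D, Finset.smul_sum]
  · simp only [map_smul]
  · intro n hn
    rw [map_smul, hN n hn, smul_zero]

lemma lastSubst_zero : lastSubst D (0 : Coeffs (Fin (K + 1)) M) = 0 := by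
  simpa using lastSubst_smul D 0 (zero_mem (polyCoeffs F M (Fin (K + 1))))

lemma lastSubst_sum {X : Type*} (s : Finset X) {f : X → Coeffs (Fin (K + 1)) M}
    (hf : ∀ x, f x ∈ polyCoeffs F M _) :
    lastSubst D (∑ x ∈ s, f x) = ∑ x ∈ s, lastSubst D (f x) := by
  classical
  induction s using Finset.induction_on with
  | empty => exact lastSubst_zero D
  | insert a s ha ih =>
    rw [Finset.sum_insert ha, Finset.sum_insert ha, ← ih,
      lastSubst_add D (hf a) (sum_mem fun x _ ↦ hf x)]

lemma lastSubst_mem_polyCoeffs (hf : f ∈ polyCoeffs F M _) :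
    lastSubst D f ∈ polyCoeffs F M _ := by
  obtain ⟨N, hN⟩ := eventually_lastCoeff_eq_zero hf
  rw [lastSubst_eq_sum D hN]
  exact sum_mem fun n _ ↦ Module.End.pow_apply_mem_of_forall_mem n
    (fun g hg ↦ dag_mem_polyCoeffs hg D) _ (lastCoeff_mem_polyCoeffs hf n)

lemma lastSubst_eq_lastCoeff_zero (hf : ∀ n, n ≠ 0 → lastCoeff F n f = 0) :
    lastSubst D f = lastCoeff F 0 f := by
  rw [lastSubst_eq_sum (N := 1) D fun n hn ↦ hf n (by lia)]
  simp

lemma lastSubst_constLast (f : Coeffs (Fin K) M) : lastSubst D (constLast (F := F) f) = f := by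
  rw [lastSubst_eq_lastCoeff_zero D fun n hn ↦ by rw [lastCoeff_constLast, if_neg hn],
    lastCoeff_constLast, if_pos rfl]

lemma lastSubst_totalD (hf : f ∈ polyCoeffs F M _) : lastSubst D (totalD D f) = 0 := by
  obtain ⟨N, hN⟩ := eventually_lastCoeff_eq_zero hf
  have hzero : ∀ n, N + 1 ≤ n → lastCoeff F n (totalD D f) = 0 := by
    intro n hn
    obtain ⟨n, rfl⟩ := Nat.exists_eq_add_of_le' (Nat.one_le_of_lt hn)
    rw [lastCoeff_totalD, lastCoeff_succ_lam_last, hN n (by lia), hN (n + 1) (by lia), map_zero,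
      sub_zero]
  rw [lastSubst_eq_sum D hzero]
  simp only [lastCoeff_totalD, map_sub, Finset.sum_sub_distrib]
  rw [Finset.sum_range_succ', Finset.sum_range_succ _ N, lastCoeff_zero_lam_last, hN N le_rfl]
  simp [lastCoeff_succ_lam_last, pow_succ]

lemma lastSubst_lam_last (hf : f ∈ polyCoeffs F M _) :
    lastSubst D (lam F (Fin.last K) f) = dag D (lastSubst D f) := by
  obtain ⟨N, hN⟩ := eventually_lastCoeff_eq_zero hf
  have hzero : ∀ n, N + 1 ≤ n → lastCoeff F n (lam F (Fin.last K) f) = 0 := by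
    intro n hn
    obtain ⟨n, rfl⟩ := Nat.exists_eq_add_of_le' (Nat.one_le_of_lt hn)
    rw [lastCoeff_succ_lam_last, hN n (by lia)]
  rw [lastSubst_eq_sum D hzero, lastSubst_eq_sum D hN, map_sum, Finset.sum_range_succ',
    lastCoeff_zero_lam_last]
  simp [lastCoeff_succ_lam_last, pow_succ']

lemma eq_sum_lam_last_pow_constLast {N : ℕ} (hN : ∀ n, N ≤ n → lastCoeff F n f = 0) :
    f = ∑ n ∈ Finset.range N,
      (lam F (Fin.last K) ^ n) (constLast (F := F) (lastCoeff F n f)) := by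
  have hpow (n : ℕ) (g : Coeffs (Fin K) M) (p : ℕ) :
      lastCoeff F p ((lam F (Fin.last K) ^ n) (constLast (F := F) g)) = if p = n then g else 0 := by
    induction n generalizing p with
    | zero => exact lastCoeff_constLast p g
    | succ n ih =>
      rw [pow_succ', Module.End.mul_apply]
      cases p with
      | zero => exact lastCoeff_zero_lam_last _
      | succ p => simp [lastCoeff_succ_lam_last, ih]
  refine ext_lastCoeff (F := F) fun p ↦ ?_
  simp only [map_sum, hpow, Finset.sum_ite_eq, Finset.mem_range]
  split_ifs with hp
  · rfl
  · exact hN p (not_lt.1 hp)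

lemma exists_eq_constLast_lastSubst_add_totalD (hf : f ∈ polyCoeffs F M _) :
    ∃ h ∈ polyCoeffs F M _, f = constLast (F := F) (lastSubst D f) + totalD D h := by
  let P {K : ℕ} := polyCoeffs F M (Fin K)
  let W : Submodule F (Coeffs (Fin (K + 1)) M) := P.map constLast ⊔ P.map (totalD D)
  have hlam : ∀ w ∈ W, lam F (Fin.last K) w ∈ W := by
    intro w hw
    obtain ⟨_, ⟨g, hg, rfl⟩, _, ⟨h, hh, rfl⟩, rfl⟩ := Submodule.mem_sup.1 hw
    refine Submodule.mem_sup.2 ⟨_, ⟨_, dag_mem_polyCoeffs hg D, rfl⟩, _, ⟨_, add_mem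
      (constLast_mem_polyCoeffs hg) (lam_mem_polyCoeffs hh (Fin.last K)), rfl⟩, ?_⟩
    have hcomm : lam F (Fin.last K) (totalD D h) = totalD D (lam F (Fin.last K) h) :=
      LinearMap.congr_fun (commute_lam_totalD D _).eq h
    rw [map_add, map_add, lam_last_constLast D, hcomm, add_assoc]
  have hfW : f ∈ W := by
    obtain ⟨N, hN⟩ := eventually_lastCoeff_eq_zero hf
    rw [eq_sum_lam_last_pow_constLast hN]
    exact sum_mem fun n _ ↦ Module.End.pow_apply_mem_of_forall_mem n hlam _
      (Submodule.mem_sup_left ⟨_, lastCoeff_mem_polyCoeffs hf n, rfl⟩)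
  obtain ⟨_, ⟨g, hg, rfl⟩, _, ⟨h, hh, rfl⟩, rfl⟩ := Submodule.mem_sup.1 hfW
  refine ⟨h, hh, ?_⟩
  rw [lastSubst_add D (constLast_mem_polyCoeffs hg) (totalD_mem_polyCoeffs hh D),
    lastSubst_constLast, lastSubst_totalD D hh, add_zero]

lemma eq_zero_of_totalD_eq_zero (hf : f ∈ polyCoeffs F M _) (h : totalD D f = 0) : f = 0 := by
  obtain ⟨N, hN⟩ := eventually_lastCoeff_eq_zero hf
  have hstep (n : ℕ) : lastCoeff F n f = dag D (lastCoeff F (n + 1) f) := by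
    have := lastCoeff_totalD D (n + 1) f
    rw [h, map_zero, lastCoeff_succ_lam_last] at this
    exact sub_eq_zero.1 this.symm
  have hiter (t n : ℕ) : lastCoeff F n f = (dag D ^ t) (lastCoeff F (n + t) f) := by
    induction t with
    | zero => rfl
    | succ t ih => rw [ih, hstep, pow_succ, Module.End.mul_apply]; rfl
  refine ext_lastCoeff (F := F) fun n ↦ ?_
  rw [hiter N, hN _ (by lia), map_zero, map_zero]

lemma lastSubst_map_eq {K' : ℕ} (T : Coeffs (Fin (K + 1)) M →ₗ[F] Coeffs (Fin (K' + 1)) M)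
    (hpoly : ∀ f ∈ polyCoeffs F M _, T f ∈ polyCoeffs F M _)
    (hcomm : ∀ f, T (totalD D f) = totalD D (T f)) (hf : f ∈ polyCoeffs F M _) :
    lastSubst D (T f) = lastSubst D (T (constLast (F := F) (lastSubst D f))) := by
  obtain ⟨h, hh, e⟩ := exists_eq_constLast_lastSubst_add_totalD D hf
  conv_lhs => rw [e]
  rw [map_add, hcomm, lastSubst_add D (hpoly _ (constLast_mem_polyCoeffs
    (lastSubst_mem_polyCoeffs D hf))) (totalD_mem_polyCoeffs (hpoly _ hh) D),
    lastSubst_totalD D (hpoly _ hh), add_zero]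

end LastVariable

/-! ### The operators `f ↦ b_{λᵢ} f` and `f ↦ f(…, λᵢ + λⱼ)` -/

section Tuples

variable {X : Type*} {k : ℕ}

lemma val_succAbove (i : Fin (k + 1)) (r : Fin k) : (i.succAbove r).1 = skip1 i.1 r.1 := by
  simp only [skip1, Fin.succAbove, Fin.lt_def, Fin.val_castSucc]
  split_ifs <;> rfl

lemma rm1_val (i : Fin (k + 1)) (a : Fin (k + 1) → X) : rm1 i.1 a = i.removeNth a :=
  funext fun r ↦ congrArg a (Fin.ext (val_succAbove i r).symm)

lemma rm2_val {i : Fin (k + 1)} {j : Fin (k + 2)} (hij : i.castSucc < j) (a : Fin (k + 2) → X) :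
    rm2 i.1 j.1 a = i.removeNth (j.removeNth a) := by
  have hij : i.1 < j.1 := hij
  refine funext fun r ↦ congrArg a (Fin.ext ?_)
  simp only [val_succAbove, skip1, skip2]
  split_ifs <;> lia

lemma removeNth_castSucc_snoc (i : Fin (k + 1)) (ρ : Fin (k + 1) → X) (x : X) :
    i.castSucc.removeNth (Fin.snoc ρ x : Fin (k + 2) → X) = Fin.snoc (i.removeNth ρ) x := by
  funext r
  induction r using Fin.lastCases with
  | last =>
    rw [Fin.removeNth_apply, Fin.succAbove_of_le_castSucc _ _ (Fin.castSucc_le_castSucc_iff.2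
      (Fin.le_last i)), Fin.succ_last, Fin.snoc_last, Fin.snoc_last]
  | cast r => simp [Fin.removeNth_apply]

lemma removeNth_castSucc (i : Fin (k + 1)) (a : Fin (k + 2) → X) :
    i.castSucc.removeNth a = Fin.snoc (i.removeNth (Fin.init a)) (a (Fin.last (k + 1))) := by
  rw [← removeNth_castSucc_snoc, Fin.snoc_init_self]

end Tuples

section ActMerge

variable {F : Type*} [Field F] {A M : Type*} [AddCommGroup A] [Module F A]
  [AddCommGroup M] [Module F M] {L : LCA F A} {K : ℕ}

/-- The operator `f ↦ b_{λᵢ} f` inserting a new variable at position `i`. -/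
def actAt (R : LCAMod F L M) (i : Fin (K + 1)) (b : A) :
    Coeffs (Fin K) M →ₗ[F] Coeffs (Fin (K + 1)) M where
  toFun f ν := R.act b (f (i.removeNth ν)) (ν i)
  map_add' f g := by funext ν; simp
  map_smul' r f := by funext ν; simp

lemma actAt_apply (R : LCAMod F L M) (i : Fin (K + 1)) (b : A) (f : Coeffs (Fin K) M)
    (ν : Fin (K + 1) → ℕ) : actAt R i b f ν = R.act b (f (i.removeNth ν)) (ν i) :=
  rfl

lemma actAt_mem_polyCoeffs (R : LCAMod F L M) (i : Fin (K + 1)) (b : A) {f : Coeffs (Fin K) M}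
    (hf : f ∈ polyCoeffs F M _) : actAt R i b f ∈ polyCoeffs F M _ := by
  refine ((mem_polyCoeffs.1 hf).biUnion
    (t := fun μ ↦ (fun n ↦ i.insertNth (α := fun _ ↦ ℕ) n μ) '' Function.support (R.act b (f μ)))
    fun μ _ ↦ (R.act_fin b (f μ)).image _).subset fun ν hν ↦ ?_
  have hf0 : f (i.removeNth ν) ≠ 0 := fun h ↦ hν (by rw [actAt_apply, h, map_zero]; rfl)
  exact Set.mem_biUnion hf0 ⟨ν i, hν, Fin.insertNth_self_removeNth i ν⟩

lemma actAt_lam (R : LCAMod F L M) (i : Fin (K + 1)) (b : A) (r : Fin K) (f : Coeffs (Fin K) M) :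
    actAt R i b (lam F r f) = lam F (i.succAbove r) (actAt R i b f) := by
  funext ν
  rw [actAt_apply, lam_apply, lam_apply, Fin.removeNth_apply]
  split_ifs
  · simp
  · rw [actAt_apply, Fin.removeNth_update_succAbove,
      Function.update_of_ne (Fin.succAbove_ne i r).symm]

lemma actAt_compLeft (R : LCAMod F L M) (i : Fin (K + 1)) (b : A) (f : Coeffs (Fin K) M) :
    actAt R i b (R.D.compLeft _ f) = R.D.compLeft _ (actAt R i b f) + lam F i (actAt R i b f) := by
  funext ν
  simp [actAt_apply, lam_apply, R.sesq_right]

lemma actAt_totalD (R : LCAMod F L M) (i : Fin (K + 1)) (b : A) (f : Coeffs (Fin K) M) :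
    actAt R i b (totalD R.D f) = totalD R.D (actAt R i b f) := by
  simp only [totalD_apply, Fin.sum_univ_succAbove _ i, map_add, map_sum, actAt_lam, actAt_compLeft]
  abel

variable (F) in
/-- The operator `f ↦ f(…, λᵢ + λⱼ)` substituting the sum of two new variables for the last
variable of `f`; the new variables are inserted at position `i` of the remaining ones and then at
position `j`. -/
def mergeAt (j : Fin (K + 2)) (i : Fin (K + 1)) :
    Coeffs (Fin (K + 1)) M →ₗ[F] Coeffs (Fin (K + 2)) M where
  toFun f ν := ((ν (j.succAbove i) + ν j).choose (ν (j.succAbove i)) : F) •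
    f (Fin.snoc (i.removeNth (j.removeNth ν)) (ν (j.succAbove i) + ν j))
  map_add' f g := by funext ν; simp
  map_smul' r f := by funext ν; simp only [Pi.smul_apply, RingHom.id_apply]; rw [smul_comm]

lemma mergeAt_apply (j : Fin (K + 2)) (i : Fin (K + 1)) (f : Coeffs (Fin (K + 1)) M)
    (ν : Fin (K + 2) → ℕ) :
    mergeAt F j i f ν = ((ν (j.succAbove i) + ν j).choose (ν (j.succAbove i)) : F) •
      f (Fin.snoc (i.removeNth (j.removeNth ν)) (ν (j.succAbove i) + ν j)) :=
  rfl

lemma mergeAt_mem_polyCoeffs (j : Fin (K + 2)) (i : Fin (K + 1)) {f : Coeffs (Fin (K + 1)) M}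
    (hf : f ∈ polyCoeffs F M _) : mergeAt F j i f ∈ polyCoeffs F M _ := by
  obtain ⟨B, hB⟩ := mem_polyCoeffs_iff_bddAbove.1 hf
  refine mem_polyCoeffs_iff_bddAbove.2 ⟨j.insertNth (B (Fin.last K))
    (i.insertNth (B (Fin.last K)) (Fin.init B)), fun ν hν ↦ ?_⟩
  have hle := hB (right_ne_zero_of_smul hν)
  have hlast := hle (Fin.last K)
  rw [Fin.snoc_last] at hlast
  rw [Fin.le_insertNth_iff, Fin.le_insertNth_iff]
  refine ⟨by lia, Nat.le_of_add_right_le hlast, fun r ↦ ?_⟩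
  have := hle r.castSucc
  rwa [Fin.snoc_castSucc] at this

lemma mergeAt_lam_castSucc (j : Fin (K + 2)) (i : Fin (K + 1)) (r : Fin K)
    (f : Coeffs (Fin (K + 1)) M) :
    mergeAt F j i (lam F r.castSucc f)
      = lam F (j.succAbove (i.succAbove r)) (mergeAt F j i f) := by
  have hj : j ≠ j.succAbove (i.succAbove r) := (Fin.succAbove_ne _ _).symm
  have hi : j.succAbove i ≠ j.succAbove (i.succAbove r) :=
    Fin.succAbove_right_injective.ne (Fin.succAbove_ne _ _).symm
  funext ν
  rw [mergeAt_apply, lam_apply, lam_apply, Fin.snoc_castSucc, Fin.removeNth_apply,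
    Fin.removeNth_apply]
  split_ifs
  · rw [smul_zero]
  · rw [mergeAt_apply, Function.update_of_ne hi, Function.update_of_ne hj,
      Fin.removeNth_update_succAbove, Fin.removeNth_update_succAbove, Fin.snoc_update]

lemma mergeAt_lam_last (j : Fin (K + 2)) (i : Fin (K + 1)) (f : Coeffs (Fin (K + 1)) M) :
    mergeAt F j i (lam F (Fin.last K) f)
      = lam F (j.succAbove i) (mergeAt F j i f) + lam F j (mergeAt F j i f) := by
  have hij : j.succAbove i ≠ j := Fin.succAbove_ne _ _
  funext ν
  simp only [Pi.add_apply, lam_apply, mergeAt_apply, Fin.snoc_last, Fin.removeNth_update,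
    Fin.removeNth_update_succAbove, Function.update_self, Function.update_of_ne hij,
    Function.update_of_ne hij.symm, Fin.update_snoc_last]
  rcases ν (j.succAbove i) with _ | x <;> rcases ν j with _ | y
  · simp
  · simp
  · simp
  · have hx : x + 1 + (y + 1) - 1 = x + (y + 1) := by lia
    have hy : x + 1 + y = x + (y + 1) := by lia
    have hchoose : (x + 1 + (y + 1)).choose (x + 1)
        = (x + (y + 1)).choose x + (x + (y + 1)).choose (x + 1) := by
      rw [← Nat.choose_succ_succ, Nat.succ_eq_add_one, Nat.add_right_comm]
    simp [hx, hy, ← add_smul, hchoose]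

lemma mergeAt_totalD (D : M →ₗ[F] M) (j : Fin (K + 2)) (i : Fin (K + 1))
    (f : Coeffs (Fin (K + 1)) M) :
    mergeAt F j i (totalD D f) = totalD D (mergeAt F j i f) := by
  have hD : mergeAt F j i (D.compLeft _ f) = D.compLeft _ (mergeAt F j i f) := by
    funext ν
    simp [mergeAt_apply]
  simp only [totalD_apply, map_add, map_sum, Fin.sum_univ_castSucc,
    Fin.sum_univ_succAbove (fun r ↦ lam F r (mergeAt F j i f)) j,
    Fin.sum_univ_succAbove (fun r ↦ lam F (j.succAbove r) (mergeAt F j i f)) i,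
    mergeAt_lam_castSucc, mergeAt_lam_last, hD]
  abel

lemma lastSubst_actAt (R : LCAMod F L M) (i : Fin (K + 2)) (b : A) {f : Coeffs (Fin (K + 1)) M}
    (hf : f ∈ polyCoeffs F M _) :
    lastSubst R.D (actAt R i b f)
      = lastSubst R.D (actAt R i b (constLast (F := F) (lastSubst R.D f))) :=
  lastSubst_map_eq R.D (actAt R i b) (fun _ h ↦ actAt_mem_polyCoeffs R i b h)
    (actAt_totalD R i b) hf

lemma lastSubst_mergeAt (D : M →ₗ[F] M) (j : Fin (K + 2)) (i : Fin (K + 1))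
    {f : Coeffs (Fin (K + 1)) M} (hf : f ∈ polyCoeffs F M _) :
    lastSubst D (mergeAt F j i f)
      = lastSubst D (mergeAt F j i (constLast (F := F) (lastSubst D f))) :=
  lastSubst_map_eq D (mergeAt F j i) (fun _ h ↦ mergeAt_mem_polyCoeffs j i h)
    (mergeAt_totalD D j i) hf

lemma lastSubst_actAt_castSucc (R : LCAMod F L M) (i : Fin (K + 1)) (b : A)
    {f : Coeffs (Fin (K + 1)) M} (hf : f ∈ polyCoeffs F M _) :
    lastSubst R.D (actAt R i.castSucc b f) = actAt R i b (lastSubst R.D f) := by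
  have hconst (g : Coeffs (Fin K) M) :
      actAt R i.castSucc b (constLast (F := F) g) = constLast (F := F) (actAt R i b g) := by
    funext ν
    simp only [actAt_apply, constLast_apply, removeNth_castSucc, Fin.snoc_last, Fin.init_snoc]
    split_ifs
    · rfl
    · simp
  rw [lastSubst_actAt R _ b hf, hconst, lastSubst_constLast]

lemma lastSubst_lam_castSucc_pow (D : M →ₗ[F] M) (i : Fin K) (p : ℕ)
    {f : Coeffs (Fin (K + 1)) M} (hf : f ∈ polyCoeffs F M _) :
    lastSubst D ((lam F i.castSucc ^ p) f) = (lam F i ^ p) (lastSubst D f) := by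
  have hcoeff (n : ℕ) (g : Coeffs (Fin (K + 1)) M) :
      lastCoeff F n ((lam F i.castSucc ^ p) g) = (lam F i ^ p) (lastCoeff F n g) := by
    funext ρ
    simp [lastCoeff_apply, lam_pow_apply]
  obtain ⟨N, hN⟩ := eventually_lastCoeff_eq_zero hf
  rw [lastSubst_eq_sum (N := N) D fun n hn ↦ by rw [hcoeff, hN n hn, map_zero],
    lastSubst_eq_sum D hN, map_sum]
  exact Finset.sum_congr rfl fun n _ ↦ by
    rw [hcoeff]
    exact (LinearMap.congr_fun ((commute_lam_dag D i).pow_pow p n).eq _).symm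

end ActMerge

section FinsumLam

variable {F : Type*} [Field F] {M : Type*} [AddCommGroup M] [Module F M]

lemma finsum_lam_pow_apply {ι : Type*} [DecidableEq ι] (i : ι) {g : ℕ → Coeffs ι M}
    (hg : (Function.support g).Finite) (ν : ι → ℕ) :
    (∑ᶠ p, (lam F i ^ p) (g p)) ν
      = ∑ p ∈ Finset.range (ν i + 1), g p (Function.update ν i (ν i - p)) := by
  rw [finsum_eq_sum_of_support_subset (s := hg.toFinset) _ fun p hp ↦ by
    rw [Set.Finite.coe_toFinset]
    exact fun h ↦ hp (by simp [h]), Finset.sum_apply]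
  simp only [lam_pow_apply, ← Finset.sum_filter]
  refine Finset.sum_subset_zero_on_sdiff (fun p hp ↦ ?_) (fun p hp ↦ ?_) fun _ _ ↦ rfl
  · simpa using (Finset.mem_filter.1 hp).2
  · simp only [Finset.mem_sdiff, Finset.mem_range_succ_iff, Finset.mem_filter, not_and',
      Set.Finite.mem_toFinset, Function.mem_support, not_not] at hp
    rw [hp.2 hp.1, Pi.zero_apply]

lemma finsum_lam_pow_mem_polyCoeffs {ι : Type*} [DecidableEq ι] (i : ι) {g : ℕ → Coeffs ι M}
    (hg : ∀ p, g p ∈ polyCoeffs F M ι) : ∑ᶠ p, (lam F i ^ p) (g p) ∈ polyCoeffs F M ι :=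
  finsum_induction (· ∈ polyCoeffs F M ι) (zero_mem _) (fun _ _ ↦ add_mem) fun p ↦ by
    rw [lam_pow]
    exact mulMonomial_mem_polyCoeffs (hg p) _

lemma lastSubst_finsum_lam_castSucc_pow_apply (D : M →ₗ[F] M) {K : ℕ} (i : Fin K)
    {g : ℕ → Coeffs (Fin (K + 1)) M} (hg : (Function.support g).Finite)
    (hpoly : ∀ p, g p ∈ polyCoeffs F M _) (ν : Fin K → ℕ) :
    lastSubst D (∑ᶠ p, (lam F i.castSucc ^ p) (g p)) ν
      = ∑ p ∈ Finset.range (ν i + 1), lastSubst D (g p) (Function.update ν i (ν i - p)) := by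
  have hterm (p : ℕ) : (lam F i.castSucc ^ p) (g p) ∈ polyCoeffs F M _ := by
    rw [lam_pow]
    exact mulMonomial_mem_polyCoeffs (hpoly p) _
  have hsupp : (Function.support fun p ↦ (lam F i.castSucc ^ p) (g p)) ⊆ hg.toFinset := by
    rw [Set.Finite.coe_toFinset]
    exact fun p hp h ↦ hp (by simp [h])
  have hsupp' : (Function.support fun p ↦ lastSubst D (g p)) ⊆ Function.support g :=
    Function.support_comp_subset (lastSubst_zero D) g
  rw [← finsum_lam_pow_apply (F := F) i (hg.subset hsupp'),
    finsum_eq_sum_of_support_subset _ hsupp, lastSubst_sum D _ hterm,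
    finsum_eq_sum_of_support_subset (s := hg.toFinset)]
  · simp only [lastSubst_lam_castSucc_pow D i _ (hpoly _)]
  · rw [Set.Finite.coe_toFinset]
    exact fun p hp ↦ hsupp' fun h ↦ hp (by simp [h])

end FinsumLam

/-! ### Compatibility of `ψ` with the differentials -/

section Differential

variable {F : Type*} [Field F] {A M : Type*} [AddCommGroup A] [Module F A]
  [AddCommGroup M] [Module F M] {L : LCA F A} {R : LCAMod F L M} {k : ℕ}

/-- The contribution `γ_{…, λᵢ + λⱼ}(…, [aᵢ_{λᵢ} aⱼ])` of a pair of arguments to `δγ`, where the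
first argument of the pair is the `i`-th one among those different from `a j`. -/
noncomputable def pairTerm (L : LCA F A) (γ : (Fin (k + 1) → A) → Coeffs (Fin (k + 1)) M)
    (a : Fin (k + 2) → A) (j : Fin (k + 2)) (i : Fin (k + 1)) : Coeffs (Fin (k + 2)) M :=
  ∑ᶠ p, (lam F (j.succAbove i) ^ p) (mergeAt F j i
    (γ (Fin.snoc (i.removeNth (j.removeNth a)) (L.br (a (j.succAbove i)) (a j) p))))

variable {γ : (Fin (k + 1) → A) → Coeffs (Fin (k + 1)) M}

lemma finite_support_mergeAt_br (h0 : ∀ x, γ (Fin.snoc x 0) = 0) (x : Fin k → A) (b c : A)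
    (j : Fin (k + 2)) (i : Fin (k + 1)) :
    (Function.support fun p ↦ mergeAt F j i (γ (Fin.snoc x (L.br b c p)))).Finite :=
  (L.br_fin b c).subset fun p hp h ↦ hp (by simp [h, h0])

lemma pairTerm_mem_polyCoeffs (hγ : ∀ a, γ a ∈ polyCoeffs F M _) (a : Fin (k + 2) → A)
    (j : Fin (k + 2)) (i : Fin (k + 1)) : pairTerm L γ a j i ∈ polyCoeffs F M _ :=
  finsum_lam_pow_mem_polyCoeffs _ fun _ ↦ mergeAt_mem_polyCoeffs j i (hγ _)

lemma pairTerm_apply (h0 : ∀ x, γ (Fin.snoc x 0) = 0) (a : Fin (k + 2) → A) {i : Fin (k + 1)}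
    {j : Fin (k + 2)} (hij : i.castSucc < j) (ν : Fin (k + 2) → ℕ) :
    pairTerm L γ a j i ν = ∑ p ∈ Finset.range (ν i.castSucc + 1),
      ((ν i.castSucc - p + ν j).choose (ν i.castSucc - p) : F) •
        γ (Fin.snoc (rm2 i.1 j.1 a) (L.br (a i.castSucc) (a j) p))
          (Fin.snoc (rm2 i.1 j.1 ν) (ν i.castSucc - p + ν j)) := by
  have hi : j.succAbove i = i.castSucc := Fin.succAbove_of_castSucc_lt j i hij
  rw [pairTerm, finsum_lam_pow_apply _ (finite_support_mergeAt_br h0 _ _ _ j i)]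
  simp only [mergeAt_apply, Fin.removeNth_update_succAbove, Fin.removeNth_update,
    Function.update_self, Function.update_of_ne (Fin.succAbove_ne j i).symm, rm2_val hij]
  rw [hi]

lemma sum_sum_lt_eq {N : Type*} [AddCommMonoid N] (f : Fin (k + 2) → Fin (k + 2) → N) :
    ∑ i, ∑ j, (if i < j then f i j else 0)
      = ∑ i : Fin (k + 1), ∑ j, if i.castSucc < j then f i.castSucc j else 0 := by
  rw [Fin.sum_univ_castSucc]
  simp [(Fin.le_last _).not_gt]

lemma deltaRaw_eq (h0 : ∀ x, γ (Fin.snoc x 0) = 0) (a : Fin (k + 2) → A) :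
    deltaRaw L R γ a
      = ∑ i : Fin (k + 2), (-1 : F) ^ i.1 • actAt R i (a i) (γ (i.removeNth a))
        + ∑ i : Fin (k + 1), ∑ j : Fin (k + 2), if i.castSucc < j then
            (-1 : F) ^ (k + i.1 + j.1) • pairTerm L γ a j i else 0 := by
  funext ν
  simp only [deltaRaw, deltaPair, sum_sum_lt_eq, Pi.add_apply, Finset.sum_apply, Pi.smul_apply,
    actAt_apply, rm1_val]
  refine congrArg _ (Finset.sum_congr rfl fun i _ ↦ Finset.sum_congr rfl fun j _ ↦ ?_)
  split_ifs with hij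
  · rw [Pi.smul_apply, pairTerm_apply h0 a hij, Fin.val_castSucc]
  · rfl

lemma deltaRaw_mem_polyCoeffs (h0 : ∀ x, γ (Fin.snoc x 0) = 0)
    (hγ : ∀ a, γ a ∈ polyCoeffs F M _) (a : Fin (k + 2) → A) :
    deltaRaw L R γ a ∈ polyCoeffs F M _ := by
  rw [deltaRaw_eq h0]
  refine add_mem (sum_mem fun i _ ↦ Submodule.smul_mem _ _ (actAt_mem_polyCoeffs R i _ (hγ _)))
    (sum_mem fun i _ ↦ sum_mem fun j _ ↦ ?_)
  split_ifs
  · exact Submodule.smul_mem _ _ (pairTerm_mem_polyCoeffs hγ a j i)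
  · exact zero_mem _

lemma psiRaw_deltaRaw_eq (h0 : ∀ x, γ (Fin.snoc x 0) = 0) (hγ : ∀ a, γ a ∈ polyCoeffs F M _)
    (a : Fin (k + 2) → A) :
    psiRaw R (deltaRaw L R γ) a
      = ∑ i : Fin (k + 2), (-1 : F) ^ i.1 • lastSubst R.D (actAt R i (a i) (γ (i.removeNth a)))
        + ∑ i : Fin (k + 1), ∑ j : Fin (k + 2), if i.castSucc < j then
            (-1 : F) ^ (k + i.1 + j.1) • lastSubst R.D (pairTerm L γ a j i) else 0 := by
  have hact (i : Fin (k + 2)) : actAt R i (a i) (γ (i.removeNth a)) ∈ polyCoeffs F M _ :=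
    actAt_mem_polyCoeffs R i _ (hγ _)
  have hact' (i : Fin (k + 2)) :=
    Submodule.smul_mem (polyCoeffs F M _) ((-1 : F) ^ i.1) (hact i)
  have hpair (i : Fin (k + 1)) (j : Fin (k + 2)) : (if i.castSucc < j then
      (-1 : F) ^ (k + i.1 + j.1) • pairTerm L γ a j i else 0) ∈ polyCoeffs F M _ := by
    split_ifs
    · exact Submodule.smul_mem _ _ (pairTerm_mem_polyCoeffs hγ a j i)
    · exact zero_mem _
  change lastSubst R.D (deltaRaw L R γ a) = _
  rw [deltaRaw_eq h0, lastSubst_add R.D (sum_mem fun i _ ↦ hact' i)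
    (sum_mem fun i _ ↦ sum_mem fun j _ ↦ hpair i j), lastSubst_sum R.D _ hact',
    lastSubst_sum R.D _ fun i ↦ sum_mem fun j _ ↦ hpair i j]
  simp only [lastSubst_sum R.D _ (hpair _), lastSubst_smul R.D _ (hact _), lastSubst_zero,
    apply_ite (lastSubst R.D), lastSubst_smul R.D _ (pairTerm_mem_polyCoeffs hγ a _ _)]

lemma lastSubst_actAt_last (b : A) {f : Coeffs (Fin (k + 1)) M} (hf : f ∈ polyCoeffs F M _) :
    lastSubst R.D (actAt R (Fin.last (k + 1)) b f) = substDag R.D fun ρ n ↦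
      if ρ (Fin.last k) = 0 then R.act b (lastSubst R.D f (Fin.init ρ)) n else 0 := by
  rw [lastSubst_actAt R _ b hf, lastSubst]
  congr 1
  funext ρ n
  rw [actAt_apply, Fin.removeNth_last, Fin.init_snoc, Fin.snoc_last, constLast_apply]
  split_ifs
  · rfl
  · simp

lemma lastSubst_mergeAt_last (D : M →ₗ[F] M) (i : Fin (k + 1)) {f : Coeffs (Fin (k + 1)) M}
    (hf : f ∈ polyCoeffs F M _) (ν : Fin (k + 1) → ℕ) :
    lastSubst D (mergeAt F (Fin.last (k + 1)) i f) ν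
      = if ν i = 0 then lastSubst D f (i.removeNth ν) else 0 := by
  have hcoeff (ρ : Fin (k + 1) → ℕ) (n : ℕ) :
      mergeAt F (Fin.last (k + 1)) i (constLast (F := F) (lastSubst D f)) (Fin.snoc ρ n)
        = if ρ i = 0 ∧ n = 0 then lastSubst D f (i.removeNth ρ) else 0 := by
    rw [mergeAt_apply, constLast_apply, Fin.snoc_last, Fin.succAbove_last, Fin.snoc_castSucc,
      Fin.snoc_last, Fin.init_snoc, Fin.removeNth_last, Fin.init_snoc]
    rcases Nat.eq_zero_or_pos n with rfl | hn
    · rcases Nat.eq_zero_or_pos (ρ i) with hi | hi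
      · simp [hi]
      · simp [hi.ne']
    · rw [if_neg (by lia), if_neg (by lia), smul_zero]
  rw [lastSubst_mergeAt D _ i hf, lastSubst_eq_lastCoeff_zero D, lastCoeff_apply, hcoeff]
  · simp
  · exact fun n hn ↦ funext fun ρ ↦ (hcoeff ρ n).trans (if_neg fun h ↦ hn h.2)

lemma lastSubst_pairTerm_last (h0 : ∀ x, γ (Fin.snoc x 0) = 0)
    (hγ : ∀ a, γ a ∈ polyCoeffs F M _) (a : Fin (k + 2) → A) (i : Fin (k + 1))
    (ν : Fin (k + 1) → ℕ) :
    lastSubst R.D (pairTerm L γ a (Fin.last (k + 1)) i) ν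
      = psiRaw R γ (Fin.snoc (i.removeNth (Fin.init a))
          (L.br (a i.castSucc) (a (Fin.last (k + 1))) (ν i))) (i.removeNth ν) := by
  rw [pairTerm, Fin.succAbove_last, Fin.removeNth_last, lastSubst_finsum_lam_castSucc_pow_apply
    R.D i (finite_support_mergeAt_br h0 _ _ _ _ i) fun p ↦ mergeAt_mem_polyCoeffs _ i (hγ _),
    Finset.sum_eq_single_of_mem (ν i) (Finset.self_mem_range_succ _)]
  · rw [lastSubst_mergeAt_last R.D i (hγ _), Function.update_self, if_pos (Nat.sub_self _),
      Fin.removeNth_update]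
    rfl
  · intro p hp hne
    rw [lastSubst_mergeAt_last R.D i (hγ _), Function.update_self, if_neg]
    have := Finset.mem_range_succ_iff.1 hp
    lia

lemma removeNth_removeNth_castSucc {X : Type*} {i j : Fin (k + 2)} (hij : i < j)
    (a : Fin (k + 3) → X) : i.removeNth (j.castSucc.removeNth a)
      = (Fin.snoc (rm2 i.1 j.1 (Fin.init a)) (a (Fin.last (k + 2))) : Fin (k + 1) → X) := by
  rw [← rm2_val (show i.castSucc < j.castSucc from hij)]
  funext r
  induction r using Fin.lastCases with
  | last =>
    rw [Fin.snoc_last]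
    refine congrArg a (Fin.ext ?_)
    simp only [skip2, Fin.val_last, Fin.val_castSucc]
    split_ifs <;> lia
  | cast r => rw [Fin.snoc_castSucc]; rfl

lemma lastSubst_pairTerm_castSucc {γ : (Fin (k + 2) → A) → Coeffs (Fin (k + 2)) M}
    (h0 : ∀ x, γ (Fin.snoc x 0) = 0) (hγ : ∀ a, γ a ∈ polyCoeffs F M _) (a : Fin (k + 3) → A)
    {i j : Fin (k + 2)} (hij : i < j) (ν : Fin (k + 2) → ℕ) :
    lastSubst R.D (pairTerm L γ a j.castSucc i) ν
      = ∑ p ∈ Finset.range (ν i + 1), substDag R.D (fun ρ n ↦ if ρ i = 0 ∧ ρ j = 0 then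
          psiRaw R γ (Fin.snoc (Fin.snoc (rm2 i.1 j.1 (Fin.init a)) (a (Fin.last (k + 2))))
            (L.br (a i.castSucc) (a j.castSucc) p)) (Fin.snoc (rm2 i.1 j.1 ρ) n) else 0)
          (Function.update ν i (ν i - p)) := by
  have hlt : i.castSucc < j.castSucc := hij
  rw [pairTerm, Fin.succAbove_of_castSucc_lt _ _ hlt, lastSubst_finsum_lam_castSucc_pow_apply
    R.D i (finite_support_mergeAt_br h0 _ _ _ _ i) fun p ↦ mergeAt_mem_polyCoeffs _ i (hγ _)]
  refine Finset.sum_congr rfl fun p _ ↦ ?_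
  rw [lastSubst_mergeAt R.D _ i (hγ _), lastSubst, removeNth_removeNth_castSucc hij a]
  congr 1
  funext ρ n
  rw [mergeAt_apply, Fin.succAbove_of_castSucc_lt _ _ hlt, constLast_apply, Fin.snoc_last,
    Fin.snoc_castSucc, Fin.snoc_castSucc, removeNth_removeNth_castSucc hij, Fin.init_snoc,
    Fin.init_snoc, Fin.snoc_last]
  simp only [Nat.add_eq_zero_iff]
  split_ifs with h
  · rw [h.1, h.2, Nat.choose_self, Nat.cast_one, one_smul]
    rfl
  · exact smul_zero _

lemma sum_lastSubst_pairTerm_castSucc (h0 : ∀ x, γ (Fin.snoc x 0) = 0)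
    (hγ : ∀ a, γ a ∈ polyCoeffs F M _) (a : Fin (k + 2) → A) (ν : Fin (k + 1) → ℕ) :
    ∑ i : Fin (k + 1), ∑ j : Fin (k + 1), (if i < j then
        (-1 : F) ^ (k + i.1 + j.1) • lastSubst R.D (pairTerm L γ a j.castSucc i) else 0) ν
      = dPair L R (psiRaw R γ) a ν := by
  cases k with
  | zero => simp [dPair]
  | succ s =>
    refine Finset.sum_congr rfl fun i _ ↦ Finset.sum_congr rfl fun j _ ↦ ?_
    split_ifs with hij
    · rw [Pi.smul_apply, lastSubst_pairTerm_castSucc h0 hγ a hij, Nat.add_right_comm (s + i.1),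
        Nat.add_right_comm s]
    · rfl

theorem psiRaw_deltaRaw (h0 : ∀ x, γ (Fin.snoc x 0) = 0) (hγ : ∀ a, γ a ∈ polyCoeffs F M _) :
    psiRaw R (deltaRaw L R γ) = dRaw L R (psiRaw R γ) := by
  funext a ν
  have hsign (i : ℕ) : (-1 : F) ^ (k + i + (k + 1)) = (-1) ^ (i + 1) := by
    rw [show k + i + (k + 1) = (i + 1) + 2 * k by lia, pow_add, pow_mul, neg_one_sq, one_pow,
      mul_one]
  have hrm (i : Fin (k + 1)) : rm1 i.1 a = i.castSucc.removeNth a := rm1_val i.castSucc a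
  have hpsi (b : Fin (k + 1) → A) : lastSubst R.D (γ b) = psiRaw R γ b := rfl
  simp only [psiRaw_deltaRaw_eq h0 hγ, dRaw, Fin.sum_univ_castSucc (n := k + 1), Pi.add_apply,
    Finset.sum_apply, Pi.smul_apply, Fin.castSucc_lt_castSucc_iff, Fin.castSucc_lt_last, if_true,
    Finset.sum_add_distrib, lastSubst_actAt_castSucc R _ _ (hγ _), lastSubst_actAt_last _ (hγ _),
    lastSubst_pairTerm_last h0 hγ, sum_lastSubst_pairTerm_castSucc h0 hγ, actAt_apply, hrm,
    rm1_val, Fin.val_castSucc, Fin.val_last, hsign, Fin.removeNth_last, hpsi]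
  abel

theorem psiRaw_deltaRaw_zero (R : LCAMod F L M) (m : M) :
    psiRaw R (deltaRaw L R fun (_ : Fin 0 → A) (_ : Fin 0 → ℕ) ↦ m) = dZero R m := by
  funext a ν
  have hIic : Finset.Iic ν = {ν} := by
    ext x
    simp [Subsingleton.elim x ν]
  simp [psiRaw, substDag, dZero, deltaRaw, deltaPair, hIic, wt, mnom, Fin.snoc,
    Nat.div_self, Nat.factorial_pos]

end Differential

/-! ### Compatibility of `ψ` with contractions and Lie derivatives -/

section Contraction

variable {F : Type*} [Field F] {M : Type*} [CommRing M] [Algebra F M] (D : M →ₗ[F] M) (m : M)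
  {K : ℕ} {f g : Coeffs (Fin (K + 1)) M}

/-- The pairing of the first variable of `f` with `e^{x∂^M} m`, where `⟨x^p, λ^q⟩ = q! δ_{p,q}`. -/
noncomputable def contract (f : Coeffs (Fin (K + 1)) M) : Coeffs (Fin K) M :=
  fun ν ↦ ∑ᶠ q, (D ^ q) m * f (Fin.cons q ν)

lemma finite_support_mul_cons (c : ℕ → M) (hf : f ∈ polyCoeffs F M _) (ν : Fin K → ℕ) :
    (Function.support fun q ↦ c q * f (Fin.cons q ν)).Finite :=
  (hf.preimage (Fin.cons_left_injective (α := fun _ ↦ ℕ) ν).injOn).subset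
    fun _ hq h ↦ hq (mul_eq_zero_of_right _ h)

lemma contract_zero : contract D m (0 : Coeffs (Fin (K + 1)) M) = 0 := by
  funext ν
  simp [contract]

lemma contract_add (hf : f ∈ polyCoeffs F M _) (hg : g ∈ polyCoeffs F M _) :
    contract D m (f + g) = contract D m f + contract D m g := by
  funext ν
  simp only [contract, Pi.add_apply, mul_add]
  exact finsum_add_distrib (finite_support_mul_cons _ hf ν) (finite_support_mul_cons _ hg ν)

lemma contract_sum {X : Type*} (s : Finset X) {f : X → Coeffs (Fin (K + 1)) M}
    (hf : ∀ x, f x ∈ polyCoeffs F M _) :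
    contract D m (∑ x ∈ s, f x) = ∑ x ∈ s, contract D m (f x) := by
  classical
  induction s using Finset.induction_on with
  | empty => exact contract_zero D m
  | insert a s ha ih =>
    rw [Finset.sum_insert ha, Finset.sum_insert ha, ← ih,
      contract_add D m (hf a) (sum_mem fun x _ ↦ hf x)]

lemma contract_mem_polyCoeffs (hf : f ∈ polyCoeffs F M _) : contract D m f ∈ polyCoeffs F M _ := by
  refine (hf.image Fin.tail).subset fun ν hν ↦ ?_
  obtain ⟨q, hq⟩ : ∃ q, (D ^ q) m * f (Fin.cons q ν) ≠ 0 := by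
    by_contra! h
    exact hν (finsum_eq_zero_of_forall_eq_zero h)
  exact ⟨Fin.cons q ν, right_ne_zero_of_mul hq, Fin.tail_cons _ _⟩

lemma contract_lam_zero (f : Coeffs (Fin (K + 1)) M) :
    contract D m (lam F 0 f) = contract D (D m) f := by
  funext ν
  have hsupp : ∀ q ∈ Function.support fun q ↦ (D ^ q) m * lam F 0 f (Fin.cons q ν),
      q ∈ Set.univ ↔ q ∈ Set.range Nat.succ := by
    rintro (_ | q) hq
    · simp [lam_apply] at hq
    · simp
  rw [contract, ← finsum_mem_univ, finsum_mem_inter_support_eq' _ _ _ hsupp,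
    finsum_mem_range Nat.succ_injective]
  simp [contract, lam_apply, pow_succ, Fin.update_cons_zero]

lemma contract_lam_succ (i : Fin K) (f : Coeffs (Fin (K + 1)) M) :
    contract D m (lam F i.succ f) = lam F i (contract D m f) := by
  funext ν
  simp only [contract, lam_apply, Fin.cons_succ, ← Fin.cons_update]
  split_ifs <;> simp

lemma contract_compLeft (hD : ∀ m n : M, D (m * n) = D m * n + m * D n)
    (hf : f ∈ polyCoeffs F M _) :
    contract D (D m) f + contract D m (D.compLeft _ f) = D.compLeft _ (contract D m f) := by
  funext ν
  rw [Pi.add_apply, contract, contract, ← finsum_add_distrib (finite_support_mul_cons _ hf ν)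
    (finite_support_mul_cons (F := F) _ (compLeft_mem_polyCoeffs hf D) ν)]
  refine Eq.trans (finsum_congr fun q ↦ ?_)
    (D.toAddMonoidHom.map_finsum (finite_support_mul_cons _ hf ν)).symm
  simp [hD, ← Module.End.mul_apply, ← pow_succ, ← pow_succ']

lemma contract_totalD (hD : ∀ m n : M, D (m * n) = D m * n + m * D n)
    (hf : f ∈ polyCoeffs F M _) :
    contract D m (totalD D f) = totalD D (contract D m f) := by
  have hlam (i : Fin (K + 1)) : lam F i f ∈ polyCoeffs F M _ := lam_mem_polyCoeffs hf i
  rw [totalD_apply, totalD_apply, contract_add D m (sum_mem fun i _ ↦ hlam i)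
    (compLeft_mem_polyCoeffs hf D), contract_sum D m _ hlam, Fin.sum_univ_succ, contract_lam_zero,
    ← contract_compLeft D m hD hf]
  simp only [contract_lam_succ]
  abel

lemma contract_constLast (f : Coeffs (Fin (K + 1)) M) :
    contract D m (constLast (F := F) f) = constLast (F := F) (contract D m f) := by
  funext ν
  rw [← Fin.snoc_init_self ν]
  simp only [contract, constLast_apply, Fin.cons_snoc_eq_snoc_cons, Fin.snoc_last, Fin.init_snoc]
  split_ifs <;> simp

lemma contract_constLast_fin_zero (f : Coeffs (Fin 0) M) (ν : Fin 0 → ℕ) :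
    contract D m (constLast (F := F) f) ν = m * f ν := by
  have hlast (q : ℕ) : (Fin.cons q ν : Fin 1 → ℕ) (Fin.last 0) = q := rfl
  rw [contract, finsum_eq_single _ 0 fun q hq ↦ by rw [constLast_apply, hlast, if_neg hq, mul_zero],
    constLast_apply, hlast, if_pos rfl, pow_zero, Module.End.one_apply]
  exact congrArg (m * f ·) (Subsingleton.elim _ _)

lemma exists_contract_eq_add_totalD (hD : ∀ m n : M, D (m * n) = D m * n + m * D n)
    (hf : f ∈ polyCoeffs F M _) :
    ∃ h ∈ polyCoeffs F M _,
      contract D m f = contract D m (constLast (F := F) (lastSubst D f)) + totalD D h := by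
  obtain ⟨h, hh, e⟩ := exists_eq_constLast_lastSubst_add_totalD D hf
  refine ⟨contract D m h, contract_mem_polyCoeffs D m hh, ?_⟩
  conv_lhs => rw [e]
  rw [contract_add D m (constLast_mem_polyCoeffs (lastSubst_mem_polyCoeffs D hf))
    (totalD_mem_polyCoeffs hh D), contract_totalD D m hD hh]

end Contraction

section LieDerivative

variable {F : Type*} [Field F] [CharZero F] {A M : Type*} [AddCommGroup A] [Module F A]
  [CommRing M] [Algebra F M] {L : LCA F A} (R : LCAMod F L M) (b : A) (m : M) {k : ℕ}

lemma iota1_expSer_eq_contract (γ : (Fin (k + 1) → A) → Coeffs (Fin (k + 1)) M) (a : Fin k → A) :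
    iota1 F b (expSer F R m) γ a = contract R.D m (γ (Fin.cons b a)) := by
  funext ν
  refine finsum_congr fun q ↦ ?_
  have hq : (q.factorial : F) ≠ 0 := Nat.cast_ne_zero.2 q.factorial_ne_zero
  simp [expSer, smul_inv_smul₀ hq]

theorem iotaC1_psiRaw (hD : ∀ m n : M, R.D (m * n) = R.D m * n + m * R.D n)
    {γ : (Fin (k + 2) → A) → Coeffs (Fin (k + 2)) M} (hγ : ∀ a, γ a ∈ polyCoeffs F M _) :
    iotaC1 F R b m (psiRaw R γ) = psiRaw R (iota1 F b (expSer F R m) γ) := by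
  funext a
  obtain ⟨h, hh, e⟩ := exists_contract_eq_add_totalD R.D m hD (hγ (Fin.cons b a))
  have hconst := contract_mem_polyCoeffs R.D m (lastSubst_mem_polyCoeffs R.D (hγ (Fin.cons b a)))
  change _ = lastSubst R.D (iota1 F b (expSer F R m) γ a)
  rw [iota1_expSer_eq_contract, e, contract_constLast,
    lastSubst_add R.D (constLast_mem_polyCoeffs hconst) (totalD_mem_polyCoeffs hh R.D),
    lastSubst_constLast, lastSubst_totalD R.D hh, add_zero]
  exact funext fun ν ↦ finsum_congr fun q ↦ mul_comm _ _

theorem iotaC1zero_psiRaw (hD : ∀ m n : M, R.D (m * n) = R.D m * n + m * R.D n)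
    {γ : (Fin 1 → A) → Coeffs (Fin 1) M} (hγ : ∀ a, γ a ∈ polyCoeffs F M _) :
    ∃ w, iotaC1zero F R b m (psiRaw R γ)
      - iota1 F b (expSer F R m) γ (fun i ↦ i.elim0) (fun i ↦ i.elim0) = R.D w := by
  have hcons : (Fin.cons b fun i : Fin 0 ↦ i.elim0 : Fin 1 → A) = fun _ ↦ b :=
    funext fun i ↦ by fin_cases i; rfl
  obtain ⟨h, -, e⟩ := exists_contract_eq_add_totalD R.D m hD (hγ fun _ ↦ b)
  refine ⟨-h (fun i ↦ i.elim0), ?_⟩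
  have hcomp : totalD R.D h (fun i ↦ i.elim0) = R.D (h fun i ↦ i.elim0) := by
    simp [totalD_apply]
  rw [iota1_expSer_eq_contract, hcons, e, Pi.add_apply, contract_constLast_fin_zero, hcomp, map_neg]
  exact sub_add_cancel_left _ _

theorem lieC1_psiRaw (hD : ∀ m n : M, R.D (m * n) = R.D m * n + m * R.D n)
    {γ : (Fin (k + 2) → A) → Coeffs (Fin (k + 2)) M} (h0 : ∀ x, γ (Fin.snoc x 0) = 0)
    (hγ : ∀ a, γ a ∈ polyCoeffs F M _) :
    lieC1 F R b m (psiRaw R γ) = psiRaw R (lie1 F R b (expSer F R m) γ) := by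
  have hδ := deltaRaw_mem_polyCoeffs h0 hγ (R := R)
  have hι0 (x) : iota1 F b (expSer F R m) γ (Fin.snoc x 0) = 0 := by
    rw [iota1_expSer_eq_contract, Fin.cons_snoc_eq_snoc_cons, h0, contract_zero]
  have hι (a) : iota1 F b (expSer F R m) γ a ∈ polyCoeffs F M _ := by
    rw [iota1_expSer_eq_contract]
    exact contract_mem_polyCoeffs R.D m (hγ _)
  have hιδ (a) : iota1 F b (expSer F R m) (deltaRaw L R γ) a ∈ polyCoeffs F M _ := by
    rw [iota1_expSer_eq_contract]
    exact contract_mem_polyCoeffs R.D m (hδ _)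
  rw [lieC1, iotaC1_psiRaw R b m hD hγ, ← psiRaw_deltaRaw hι0 hι, ← psiRaw_deltaRaw h0 hγ,
    iotaC1_psiRaw R b m hD hδ]
  exact funext fun a ↦
    (lastSubst_add R.D (deltaRaw_mem_polyCoeffs hι0 hι a) (hιδ a)).symm

end LieDerivative

/-! ### The kernel of `ψ` -/

section Kernel

variable {F : Type*} [Field F] {A M : Type*} [AddCommGroup A] [Module F A]
  [AddCommGroup M] [Module F M] {L : LCA F A} {R : LCAMod F L M} {k : ℕ}

lemma eq_neg_lam_iff {ι : Type*} [DecidableEq ι] {f g : Coeffs ι M} {i : ι} :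
    g = -lam F i f ↔ ∀ ν, g ν = if ν i = 0 then 0 else -f (Function.update ν i (ν i - 1)) := by
  rw [funext_iff]
  refine forall_congr' fun ν ↦ ?_
  rw [Pi.neg_apply, lam_apply, apply_ite Neg.neg, neg_zero]

lemma update_comp_perm {ι X : Type*} [DecidableEq ι] (σ : Equiv.Perm ι) (a : ι → X) (i : ι)
    (x : X) : Function.update a (σ i) x ∘ σ = Function.update (a ∘ σ) i x := by
  rw [Function.update_comp_equiv, Equiv.symm_apply_apply]

lemma lam_funLeft_perm {ι : Type*} [DecidableEq ι] (σ : Equiv.Perm ι) (i : ι) (f : Coeffs ι M) :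
    lam F (σ i) (LinearMap.funLeft F M (· ∘ σ) f) = LinearMap.funLeft F M (· ∘ σ) (lam F i f) := by
  funext ν
  simp [lam_apply, LinearMap.funLeft_apply, update_comp_perm]

lemma totalD_funLeft_perm {ι : Type*} [Fintype ι] [DecidableEq ι] (D : M →ₗ[F] M)
    (σ : Equiv.Perm ι) (f : Coeffs ι M) :
    totalD D (LinearMap.funLeft F M (· ∘ σ) f) = LinearMap.funLeft F M (· ∘ σ) (totalD D f) := by
  rw [totalD_apply, totalD_apply, map_add, map_sum, ← Equiv.sum_comp σ]
  simp only [lam_funLeft_perm]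
  rfl

lemma funLeft_perm_mem_polyCoeffs {ι : Type*} (σ : Equiv.Perm ι) {f : Coeffs ι M}
    (hf : f ∈ polyCoeffs F M ι) : LinearMap.funLeft F M (· ∘ σ) f ∈ polyCoeffs F M ι :=
  Set.Finite.preimage σ.surjective.injective_comp_right.injOn hf

lemma totalD_injOn_polyCoeffs (D : M →ₗ[F] M) (K : ℕ) :
    Set.InjOn (totalD D) (polyCoeffs F M (Fin (K + 1)) : Set (Coeffs (Fin (K + 1)) M)) :=
  fun f hf g hg h ↦ sub_eq_zero.1 <| eq_zero_of_totalD_eq_zero D (sub_mem hf hg) <| by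
    rw [map_sub, sub_eq_zero.2 h]

lemma GammaD_eq_totalD (η : (Fin k → A) → Coeffs (Fin k) M) (a : Fin k → A) :
    GammaD R η a = totalD R.D (η a) := by
  funext ν
  simp [GammaD, totalD_apply, lam_apply, add_comm]

lemma IsGamma.sub {γ θ : (Fin k → A) → Coeffs (Fin k) M} (hγ : IsGamma R k γ)
    (hθ : IsGamma R k θ) : IsGamma R k (γ - θ) where
  map_add a i x y := by
    simp only [Pi.sub_apply, hγ.map_add, hθ.map_add, add_sub_add_comm]
  map_smul a i r x := by
    simp only [Pi.sub_apply, hγ.map_smul, hθ.map_smul, smul_sub]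
  fin a := Submodule.sub_mem (polyCoeffs F M _) (hγ.fin a) (hθ.fin a)
  sesq a i x ν := by
    simp only [Pi.sub_apply, hγ.sesq, hθ.sesq]
    split_ifs <;> abel
  skew a ν σ := by
    simp only [Pi.sub_apply, hγ.skew, hθ.skew, smul_sub]

lemma IsGamma.of_GammaD {η : (Fin (k + 1) → A) → Coeffs (Fin (k + 1)) M}
    (hη : ∀ a, η a ∈ polyCoeffs F M _) (h : IsGamma R (k + 1) (GammaD R η)) :
    IsGamma R (k + 1) η where
  map_add a i x y := totalD_injOn_polyCoeffs R.D k (hη _) (add_mem (hη _) (hη _)) <| by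
    simp only [_root_.map_add, ← GammaD_eq_totalD, h.map_add]
  map_smul a i r x := totalD_injOn_polyCoeffs R.D k (hη _) (Submodule.smul_mem _ r (hη _)) <| by
    simp only [_root_.map_smul, ← GammaD_eq_totalD, h.map_smul]
  fin := hη
  sesq a i x := eq_neg_lam_iff (F := F).1 <| totalD_injOn_polyCoeffs R.D k (hη _)
      (neg_mem (lam_mem_polyCoeffs (hη _) i)) <| by
    have hcomm := LinearMap.congr_fun (commute_lam_totalD R.D i).eq (η (Function.update a i x))
    simp only [Module.End.mul_apply] at hcomm
    rw [map_neg, ← hcomm, ← GammaD_eq_totalD, ← GammaD_eq_totalD]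
    exact eq_neg_lam_iff.2 (h.sesq a i x)
  skew a ν σ := congrFun (a := ν) (totalD_injOn_polyCoeffs R.D k
      (funLeft_perm_mem_polyCoeffs σ (hη _)) (zsmul_mem (hη a) _) <| by
    rw [totalD_funLeft_perm, map_zsmul, ← GammaD_eq_totalD, ← GammaD_eq_totalD]
    exact funext fun ν ↦ h.skew a ν σ)

theorem exists_sub_eq_GammaD {γ θ : (Fin (k + 1) → A) → Coeffs (Fin (k + 1)) M}
    (hγ : IsGamma R (k + 1) γ) (hθ : IsGamma R (k + 1) θ) (h : psiRaw R γ = psiRaw R θ) :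
    ∃ η, IsGamma R (k + 1) η ∧ γ - θ = GammaD R η := by
  have hsub := hγ.sub hθ
  have hdiv (a) : ∃ f ∈ polyCoeffs F M _, (γ - θ) a = totalD R.D f := by
    obtain ⟨f, hf, e⟩ := exists_eq_constLast_lastSubst_add_totalD R.D (hsub.fin a)
    have hzero : lastSubst R.D ((γ - θ) a) = 0 := by
      rw [← add_left_inj (lastSubst R.D (θ a)), ← lastSubst_add R.D (hsub.fin a) (hθ.fin a),
        Pi.sub_apply, sub_add_cancel, zero_add]
      exact congrFun h a
    exact ⟨f, hf, by rwa [hzero, map_zero, zero_add] at e⟩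
  choose η hη e using hdiv
  have hGammaD : γ - θ = GammaD R η := funext fun a ↦ (e a).trans (GammaD_eq_totalD η a).symm
  exact ⟨η, .of_GammaD hη (hGammaD ▸ hsub), hGammaD⟩

end Kernel

/-! ### Expansions modulo torsion -/

section Expansion

variable {F : Type*} [Field F] {A : Type*} [AddCommGroup A] [Module F A] {L : LCA F A}

variable (L) in
/-- The torsion of the `F[∂]`-module `A`, as a subspace. -/
def torsionSubmodule : Submodule F A where
  carrier := {x | IsTor L x}
  zero_mem' := ⟨1, one_ne_zero, map_zero _⟩
  add_mem' := by
    rintro a b ⟨p, hp, hpa⟩ ⟨q, hq, hqb⟩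
    refine ⟨p * q, mul_ne_zero hp hq, ?_⟩
    rw [map_add, map_mul, Module.End.mul_apply, Module.End.mul_apply, hqb, map_zero, add_zero,
      ← Module.End.mul_apply, ← map_mul, mul_comm, map_mul, Module.End.mul_apply, hpa, map_zero]
  smul_mem' r a := fun ⟨p, hp, hpa⟩ ↦ ⟨p, hp, by rw [map_smul, hpa, smul_zero]⟩

lemma IsTor.map_D {t : A} (h : IsTor L t) : IsTor L (L.D t) := by
  obtain ⟨p, hp, hpt⟩ := h
  refine ⟨p, hp, ?_⟩
  have hcomm := LinearMap.congr_fun (Commute.all p .X |>.map (Polynomial.aeval L.D)).eq t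
  simpa [hpt] using hcomm

variable (L) in
/-- `π` expands the elements of `A` modulo torsion as `a ≡ ∑ₙ ∂ⁿ (π a n)`, compatibly with `∂`. -/
structure IsExpansion (π : A →ₗ[F] (ℕ →₀ A)) : Prop where
  isTor_sub : ∀ a, IsTor L (a - (π a).sum fun n u ↦ (L.D ^ n) u)
  map_D : ∀ a, π (L.D a) = (π a).mapDomain (· + 1)

theorem Decomposes.exists_isExpansion (h : Decomposes L) :
    ∃ π : A →ₗ[F] (ℕ →₀ A), IsExpansion L π := by
  obtain ⟨U, hU⟩ := h
  let S : (ℕ →₀ U) →ₗ[F] A := Finsupp.lsum F fun n ↦ (L.D ^ n) ∘ₗ U.subtype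
  let e : (torsionSubmodule L × (ℕ →₀ U)) ≃ₗ[F] A :=
    LinearEquiv.ofBijective ((torsionSubmodule L).subtype.coprod S) hU
  have he (t f) : e (t, f) = t + S f := rfl
  have hSD (f : ℕ →₀ U) : S (f.mapDomain (· + 1)) = L.D (S f) := by
    simp only [S, Finsupp.lsum_apply]
    rw [Finsupp.sum_mapDomain_index (by simp) (by simp), Finsupp.sum, Finsupp.sum, map_sum]
    simp [pow_succ']
  refine ⟨Finsupp.mapRange.linearMap U.subtype ∘ₗ LinearMap.snd F _ _ ∘ₗ e.symm.toLinearMap, ?_, ?_⟩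
  · intro a
    obtain ⟨⟨t, f⟩, rfl⟩ := e.surjective a
    have hS : (f.mapRange U.subtype (map_zero _)).sum (fun n u ↦ (L.D ^ n) u) = S f :=
      Finsupp.sum_mapRange_index fun n ↦ map_zero _
    simp only [LinearMap.comp_apply, LinearEquiv.coe_coe, LinearEquiv.symm_apply_apply,
      LinearMap.snd_apply, Finsupp.mapRange.linearMap_apply]
    rw [he, hS, add_sub_cancel_right]
    exact t.2
  · intro a
    obtain ⟨⟨t, f⟩, rfl⟩ := e.surjective a
    have heD : L.D (e (t, f)) = e (⟨L.D t, t.2.map_D⟩, f.mapDomain (· + 1)) := by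
      rw [he, he, map_add, hSD]
    simp only [heD, LinearMap.comp_apply, LinearEquiv.coe_coe, LinearEquiv.symm_apply_apply,
      LinearMap.snd_apply, Finsupp.mapRange.linearMap_apply]
    exact (Finsupp.mapDomain_mapRange _ _ _ _ fun _ _ ↦ map_add _ _ _).symm

end Expansion

/-! ### Surjectivity of `ψ` -/

section Surjectivity

variable {F : Type*} [Field F] {A M : Type*} [AddCommGroup A] [Module F A]
  [AddCommGroup M] [Module F M] {L : LCA F A}

section Permute

variable {ι : Type*}

/-- Simultaneous permutation of the arguments and of the variables of `γ`. -/
def permute (σ : Equiv.Perm ι) (γ : MultilinearMap F (fun _ : ι ↦ A) (Coeffs ι M)) :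
    MultilinearMap F (fun _ : ι ↦ A) (Coeffs ι M) :=
  (LinearMap.funLeft F M (· ∘ σ)).compMultilinearMap (γ.domDomCongr σ)

lemma permute_apply (σ : Equiv.Perm ι) (γ : MultilinearMap F (fun _ : ι ↦ A) (Coeffs ι M))
    (a : ι → A) : permute σ γ a = LinearMap.funLeft F M (· ∘ σ) (γ (a ∘ σ)) :=
  rfl

lemma permute_mem_polyCoeffs {γ : MultilinearMap F (fun _ : ι ↦ A) (Coeffs ι M)}
    (hγ : ∀ a, γ a ∈ polyCoeffs F M ι) (σ : Equiv.Perm ι) (a : ι → A) :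
    permute σ γ a ∈ polyCoeffs F M ι :=
  funLeft_perm_mem_polyCoeffs σ (hγ _)

lemma permute_permute (τ σ : Equiv.Perm ι) (γ : MultilinearMap F (fun _ : ι ↦ A) (Coeffs ι M)) :
    permute τ (permute σ γ) = permute (τ * σ) γ :=
  rfl

end Permute

section Expand

variable {ι : Type*} [DecidableEq ι]

variable (L) in
/-- Sesquilinearity of a family of polynomials in its `i`-th argument. -/
def IsSesquilinearAt (γ : (ι → A) → Coeffs ι M) (i : ι) : Prop :=
  ∀ a x, γ (Function.update a i (L.D x)) = -lam F i (γ (Function.update a i x))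

/-- The family obtained from `γ` by expanding the `i`-th argument as `∑ₙ ∂ⁿ uₙ` and letting each
`∂` act as `-λᵢ`. -/
noncomputable def expandAt (π : A →ₗ[F] (ℕ →₀ A)) (i : ι)
    (γ : MultilinearMap F (fun _ : ι ↦ A) (Coeffs ι M)) :
    MultilinearMap F (fun _ : ι ↦ A) (Coeffs ι M) :=
  .mk' (fun a ↦ (π (a i)).sum fun n u ↦ ((-lam F i) ^ n) (γ (Function.update a i u)))
    (by
      intro a j x y
      obtain rfl | hij := eq_or_ne j i
      · simp only [Function.update_self, Function.update_idem, map_add]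
        exact Finsupp.sum_add_index' (by simp) (by simp)
      · simp only [Function.update_of_ne hij.symm, Function.update_comm hij, γ.map_update_add,
          map_add, Finsupp.sum_add])
    (by
      intro a j r x
      obtain rfl | hij := eq_or_ne j i
      · simp only [Function.update_self, Function.update_idem, map_smul]
        rw [Finsupp.sum_smul_index' (by simp), Finsupp.smul_sum]
        simp
      · simp only [Function.update_of_ne hij.symm, Function.update_comm hij, γ.map_update_smul,
          map_smul, Finsupp.smul_sum])

variable {π : A →ₗ[F] (ℕ →₀ A)} {γ : MultilinearMap F (fun _ : ι ↦ A) (Coeffs ι M)}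

lemma expandAt_apply (π : A →ₗ[F] (ℕ →₀ A)) (i : ι)
    (γ : MultilinearMap F (fun _ : ι ↦ A) (Coeffs ι M)) (a : ι → A) :
    expandAt π i γ a
      = (π (a i)).sum fun n u ↦ ((-lam F i) ^ n) (γ (Function.update a i u)) :=
  rfl

lemma neg_lam_pow_mem_polyCoeffs {f : Coeffs ι M} (hf : f ∈ polyCoeffs F M ι) (i : ι) (n : ℕ) :
    ((-lam F i) ^ n) f ∈ polyCoeffs F M ι :=
  Module.End.pow_apply_mem_of_forall_mem n
    (fun _ hg ↦ Submodule.neg_mem _ (lam_mem_polyCoeffs hg i)) _ hf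

lemma expandAt_mem_polyCoeffs (hγ : ∀ a, γ a ∈ polyCoeffs F M ι) (i : ι) (a : ι → A) :
    expandAt π i γ a ∈ polyCoeffs F M ι :=
  sum_mem fun n _ ↦ neg_lam_pow_mem_polyCoeffs (hγ _) i n

lemma isSesquilinearAt_expandAt_self (hπ : IsExpansion L π) (i : ι) :
    IsSesquilinearAt L (expandAt π i γ) i := by
  intro a x
  simp only [expandAt_apply, Function.update_self, Function.update_idem, hπ.map_D]
  rw [Finsupp.sum_mapDomain_index (by simp) (by simp), Finsupp.sum, Finsupp.sum, map_sum,
    ← Finset.sum_neg_distrib]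
  simp [pow_succ']

lemma IsSesquilinearAt.expandAt {i j : ι} (h : IsSesquilinearAt L γ j) (hij : i ≠ j) :
    IsSesquilinearAt L (expandAt π i γ) j := by
  intro a x
  have hcomm (n : ℕ) (f : Coeffs ι M) :
      ((-lam F i) ^ n) (lam F j f) = lam F j (((-lam F i) ^ n) f) :=
    LinearMap.congr_fun ((Commute.neg_left (commute_lam_lam (F := F) (M := M) i j)).pow_left n).eq f
  simp only [expandAt_apply, Function.update_of_ne hij, Function.update_comm hij.symm, h _ _,
    map_neg, hcomm, Finsupp.sum, map_sum, Finset.sum_neg_distrib]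

lemma IsSesquilinearAt.permute {i : ι} (h : IsSesquilinearAt L γ i) (σ : Equiv.Perm ι) :
    IsSesquilinearAt L (permute σ γ) (σ i) := by
  intro a x
  rw [permute_apply, permute_apply, update_comp_perm, update_comp_perm, h, map_neg,
    lam_funLeft_perm]

lemma permute_expandAt (σ : Equiv.Perm ι) (i : ι) :
    permute σ (expandAt π i γ) = expandAt π (σ i) (permute σ γ) := by
  ext1 a
  have hpow (n : ℕ) (f : Coeffs ι M) : LinearMap.funLeft F M (· ∘ σ) (((-lam F i) ^ n) f)
      = ((-lam F (σ i)) ^ n) (LinearMap.funLeft F M (· ∘ σ) f) := by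
    induction n generalizing f with
    | zero => rfl
    | succ n ih =>
      rw [pow_succ, pow_succ, Module.End.mul_apply, Module.End.mul_apply, ih, LinearMap.neg_apply,
        LinearMap.neg_apply, map_neg, lam_funLeft_perm]
  simp only [permute_apply, expandAt_apply, update_comp_perm, Finsupp.sum, map_sum, hpow]
  rfl

end Expand

section LastSubst

variable {R : LCAMod F L M} {k : ℕ} {c : (Fin (k + 1) → A) → (Fin k → ℕ) → M}
  {γ : MultilinearMap F (fun _ : Fin (k + 1) ↦ A) (Coeffs (Fin (k + 1)) M)}

/-- The multilinear map underlying a poly-`λ`-bracket. -/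
def IsCBr.toMultilinearMap (hc : IsCBr R k c) :
    MultilinearMap F (fun _ : Fin (k + 1) ↦ A) (Coeffs (Fin k) M) :=
  .mk' c hc.map_add hc.map_smul

lemma IsCBr.lastSubst_neg_lam (hc : IsCBr R k c) {f : Coeffs (Fin (k + 1)) M}
    (hf : f ∈ polyCoeffs F M _) {s : F} {a : Fin (k + 1) → A} {i : Fin (k + 1)} {x : A}
    (h : lastSubst R.D f = s • c (Function.update a i x)) :
    lastSubst R.D (-lam F i f) = s • c (Function.update a i (L.D x)) := by
  rw [← neg_one_smul F, lastSubst_smul R.D _ (lam_mem_polyCoeffs hf i), neg_one_smul]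
  induction i using Fin.lastCases with
  | last =>
    have hsesq : c (Function.update a (Fin.last k) (L.D x))
        = totalD R.D (c (Function.update a (Fin.last k) x)) := by
      funext ν
      simp [hc.sesq₂, totalD_apply, lam_apply, add_comm]
    rw [lastSubst_lam_last R.D hf, h, hsesq, dag, LinearMap.neg_apply, neg_neg,
      _root_.map_smul]
  | cast i =>
    have hsesq := eq_neg_lam_iff (F := F).2 (hc.sesq₁ a i x)
    have hlam := lastSubst_lam_castSucc_pow R.D i 1 hf
    rw [pow_one, pow_one] at hlam
    rw [hlam, h, hsesq, _root_.map_smul, smul_neg]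

lemma IsCBr.lastSubst_neg_lam_pow (hc : IsCBr R k c) {f : Coeffs (Fin (k + 1)) M}
    (hf : f ∈ polyCoeffs F M _) {s : F} {a : Fin (k + 1) → A} {i : Fin (k + 1)} {x : A}
    (h : lastSubst R.D f = s • c (Function.update a i x)) (n : ℕ) :
    lastSubst R.D (((-lam F i) ^ n) f) = s • c (Function.update a i ((L.D ^ n) x)) := by
  induction n with
  | zero => exact h
  | succ n ih =>
    rw [pow_succ', pow_succ']
    exact hc.lastSubst_neg_lam (neg_lam_pow_mem_polyCoeffs hf i n) ih

lemma IsCBr.lastSubst_expandAt (hc : IsCBr R k c) (hv : VanishOnTorsion L c)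
    {π : A →ₗ[F] (ℕ →₀ A)} (hπ : IsExpansion L π) (hγ : ∀ a, γ a ∈ polyCoeffs F M _) {s : F}
    (h : ∀ a, lastSubst R.D (γ a) = s • c a) (i : Fin (k + 1)) (a : Fin (k + 1) → A) :
    lastSubst R.D (expandAt π i γ a) = s • c a := by
  have hexpand : c a = ∑ n ∈ (π (a i)).support,
      c (Function.update a i ((L.D ^ n) (π (a i) n))) := by
    have htor : c (Function.update a i (a i - (π (a i)).sum fun n u ↦ (L.D ^ n) u)) = 0 :=
      funext fun ν ↦ hv _ ν ⟨i, by simpa using hπ.isTor_sub (a i)⟩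
    have hsub := hc.toMultilinearMap.map_update_sub a i (a i)
      ((π (a i)).sum fun n u ↦ (L.D ^ n) u)
    rw [Function.update_eq_self, Finsupp.sum, hc.toMultilinearMap.map_update_sum] at hsub
    exact sub_eq_zero.1 (hsub.symm.trans htor)
  rw [expandAt_apply, Finsupp.sum,
    lastSubst_sum R.D _ fun n ↦ neg_lam_pow_mem_polyCoeffs (hγ _) i n, hexpand, Finset.smul_sum]
  exact Finset.sum_congr rfl fun n _ ↦ hc.lastSubst_neg_lam_pow (hγ _) (h _) n

/-- As `γ` is not skew-symmetric, its image under `ψ` is controlled after every permutation; this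
survives the expansion of arguments and determines the image of the antisymmetrization. -/
theorem IsCBr.exists_multilinearMap (hc : IsCBr R k c) (hv : VanishOnTorsion L c)
    {π : A →ₗ[F] (ℕ →₀ A)} (hπ : IsExpansion L π) (S : Finset (Fin (k + 1))) :
    ∃ γ : MultilinearMap F (fun _ : Fin (k + 1) ↦ A) (Coeffs (Fin (k + 1)) M),
      (∀ a, γ a ∈ polyCoeffs F M _) ∧ (∀ i ∈ S, IsSesquilinearAt L γ i) ∧
      ∀ σ a, lastSubst R.D (permute σ γ a) = ((Equiv.Perm.sign σ : ℤ) : F) • c a := by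
  induction S using Finset.induction_on with
  | empty =>
    refine ⟨constLast.compMultilinearMap hc.toMultilinearMap,
      fun a ↦ constLast_mem_polyCoeffs (hc.fin a), by simp, fun σ a ↦ ?_⟩
    have hskew : c a = (Equiv.Perm.sign σ : ℤ) • lastSubst R.D
        (permute σ (constLast.compMultilinearMap hc.toMultilinearMap) a) :=
      funext fun ν ↦ hc.skew a ν σ
    rw [hskew, Int.cast_smul_eq_zsmul, smul_smul, ← Units.val_mul, Int.units_mul_self,
      Units.val_one, one_smul]
  | insert i S _ ih =>
    obtain ⟨γ, hγ, hsesq, hlast⟩ := ih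
    refine ⟨LCC.expandAt π i γ, expandAt_mem_polyCoeffs hγ i, fun j hj ↦ ?_, fun σ ↦ ?_⟩
    · obtain rfl | hij := eq_or_ne i j
      · exact isSesquilinearAt_expandAt_self hπ i
      · exact (hsesq j (Finset.mem_of_mem_insert_of_ne hj hij.symm)).expandAt hij
    · rw [permute_expandAt]
      exact hc.lastSubst_expandAt hv hπ (permute_mem_polyCoeffs hγ σ) (hlast σ) (σ i)

end LastSubst

section Antisymmetrize

variable {R : LCAMod F L M} {k : ℕ}

/-- The antisymmetrization of `γ` under simultaneous permutations of arguments and variables. -/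
noncomputable def antisymmetrize (γ : MultilinearMap F (fun _ : Fin k ↦ A) (Coeffs (Fin k) M)) :
    MultilinearMap F (fun _ : Fin k ↦ A) (Coeffs (Fin k) M) :=
  (k.factorial : F)⁻¹ • ∑ σ : Equiv.Perm (Fin k), ((Equiv.Perm.sign σ : ℤ) : F) • permute σ γ

variable {γ : MultilinearMap F (fun _ : Fin k ↦ A) (Coeffs (Fin k) M)}

lemma antisymmetrize_apply (a : Fin k → A) :
    antisymmetrize γ a = (k.factorial : F)⁻¹ •
      ∑ σ : Equiv.Perm (Fin k), ((Equiv.Perm.sign σ : ℤ) : F) • permute σ γ a := by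
  simp only [antisymmetrize, smul_apply, sum_apply]

lemma permute_antisymmetrize (τ : Equiv.Perm (Fin k)) (a : Fin k → A) :
    permute τ (antisymmetrize γ) a = (Equiv.Perm.sign τ : ℤ) • antisymmetrize γ a := by
  have hsum : LinearMap.funLeft F M (· ∘ τ) (∑ σ : Equiv.Perm (Fin k),
        ((Equiv.Perm.sign σ : ℤ) : F) • permute σ γ (a ∘ τ))
      = (Equiv.Perm.sign τ : ℤ) • ∑ σ : Equiv.Perm (Fin k),
        ((Equiv.Perm.sign σ : ℤ) : F) • permute σ γ a := by
    rw [map_sum, ← Equiv.sum_comp (Equiv.mulLeft τ) fun σ ↦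
      ((Equiv.Perm.sign σ : ℤ) : F) • permute σ γ a, Finset.smul_sum]
    refine Finset.sum_congr rfl fun σ _ ↦ ?_
    rw [Equiv.coe_mulLeft, ← permute_permute, Equiv.Perm.sign_mul, ← Int.cast_smul_eq_zsmul F,
      smul_smul, ← Int.cast_mul, ← Units.val_mul, ← mul_assoc, Int.units_mul_self, one_mul,
      map_smul]
    rfl
  rw [permute_apply, antisymmetrize_apply, antisymmetrize_apply, map_smul, hsum, smul_comm]

lemma isGamma_antisymmetrize (hγ : ∀ a, γ a ∈ polyCoeffs F M _)
    (hsesq : ∀ i, IsSesquilinearAt L γ i) : IsGamma R k (antisymmetrize γ) where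
  map_add := (antisymmetrize γ).map_update_add
  map_smul := (antisymmetrize γ).map_update_smul
  fin a := by
    rw [antisymmetrize_apply]
    exact Submodule.smul_mem _ _ <| sum_mem fun σ _ ↦
      Submodule.smul_mem _ _ (permute_mem_polyCoeffs hγ σ a)
  sesq a i x := by
    have hperm (σ : Equiv.Perm (Fin k)) : IsSesquilinearAt L (permute σ γ) i :=
      σ.apply_symm_apply i ▸ (hsesq (σ.symm i)).permute σ
    refine eq_neg_lam_iff (F := F).1 ?_
    simp only [antisymmetrize_apply, hperm _ _ _, smul_neg, Finset.sum_neg_distrib, map_smul,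
      map_sum]
  skew a ν σ := congrFun (permute_antisymmetrize σ a) ν

lemma lastSubst_antisymmetrize [CharZero F] (D : M →ₗ[F] M)
    {γ : MultilinearMap F (fun _ : Fin (k + 1) ↦ A) (Coeffs (Fin (k + 1)) M)}
    (hγ : ∀ a, γ a ∈ polyCoeffs F M _) {a : Fin (k + 1) → A} {f : Coeffs (Fin k) M}
    (h : ∀ σ, lastSubst D (permute σ γ a) = ((Equiv.Perm.sign σ : ℤ) : F) • f) :
    lastSubst D (antisymmetrize γ a) = f := by
  have hmem (σ : Equiv.Perm (Fin (k + 1))) := permute_mem_polyCoeffs hγ σ a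
  have hterm (σ : Equiv.Perm (Fin (k + 1))) :
      lastSubst D (((Equiv.Perm.sign σ : ℤ) : F) • permute σ γ a) = f := by
    rw [lastSubst_smul D _ (hmem σ), h, smul_smul, ← Int.cast_mul, ← Units.val_mul,
      Int.units_mul_self, Units.val_one, Int.cast_one, one_smul]
  rw [antisymmetrize_apply,
    lastSubst_smul D _ (sum_mem fun σ _ ↦ Submodule.smul_mem _ _ (hmem σ)),
    lastSubst_sum D _ fun σ ↦ Submodule.smul_mem _ _ (hmem σ), Finset.sum_congr rfl
    fun σ _ ↦ hterm σ, Finset.sum_const, Finset.card_univ, Fintype.card_perm, Fintype.card_fin,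
    ← Nat.cast_smul_eq_nsmul F, inv_smul_smul₀ (Nat.cast_ne_zero.2 (k + 1).factorial_ne_zero)]

theorem IsCBr.exists_psiRaw_eq [CharZero F] {c : (Fin (k + 1) → A) → Coeffs (Fin k) M}
    (hc : IsCBr R k c) (hv : VanishOnTorsion L c) (hdec : Decomposes L) :
    ∃ γ, IsGamma R (k + 1) γ ∧ psiRaw R γ = c := by
  obtain ⟨π, hπ⟩ := hdec.exists_isExpansion
  obtain ⟨γ, hγ, hsesq, hlast⟩ := hc.exists_multilinearMap hv hπ Finset.univ
  exact ⟨antisymmetrize γ, isGamma_antisymmetrize hγ fun i ↦ hsesq i (Finset.mem_univ i),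
    funext fun a ↦ lastSubst_antisymmetrize R.D hγ fun σ ↦ hlast σ a⟩

end Antisymmetrize

end Surjectivity

/-! ### The bracket of one-chains -/

section TensorQuotient

open scoped TensorProduct

variable {F : Type*} [CommRing F] {A X Y : Type*} [AddCommGroup A] [Module F A]
  [AddCommGroup X] [Module F X] [AddCommGroup Y] [Module F Y]

/-- The operator `∂ ⊗ 1 + 1 ⊗ ∂` on `A ⊗ X`, where `∂` acts by `D` on `A` and by `E` on `X`. -/
noncomputable def tensorD (D : Module.End F A) (E : Module.End F X) : Module.End F (A ⊗[F] X) :=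
  D.rTensor X + E.lTensor A

@[simp]
lemma tensorD_tmul (D : Module.End F A) (E : Module.End F X) (a : A) (m : X) :
    tensorD D E (a ⊗ₜ m) = D a ⊗ₜ m + a ⊗ₜ E m :=
  rfl

lemma mk_aeval_tmul (D : Module.End F A) (E : Module.End F X) (p : Polynomial F) (a : A) (m : X) :
    (Submodule.Quotient.mk (Polynomial.aeval D p a ⊗ₜ m) : (A ⊗[F] X) ⧸ (tensorD D E).range)
      = Submodule.Quotient.mk (a ⊗ₜ Polynomial.aeval (-E) p m) := by
  induction p using Polynomial.induction_on generalizing m with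
  | C r =>
    simp [Polynomial.aeval_C, Algebra.algebraMap_eq_smul_one, TensorProduct.smul_tmul']
  | add p q hp hq =>
    simp only [map_add, LinearMap.add_apply, TensorProduct.add_tmul, TensorProduct.tmul_add,
      Submodule.Quotient.mk_add, hp, hq]
  | monomial n r ih =>
    rw [pow_succ, ← mul_assoc, map_mul (Polynomial.aeval (-E)), Module.End.mul_apply,
      Polynomial.aeval_X, ← ih, Submodule.Quotient.eq]
    refine ⟨Polynomial.aeval D (Polynomial.C r * Polynomial.X ^ n) a ⊗ₜ m, ?_⟩
    rw [tensorD_tmul, mul_comm _ Polynomial.X, map_mul (Polynomial.aeval D) Polynomial.X,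
      Module.End.mul_apply, Polynomial.aeval_X, LinearMap.neg_apply, TensorProduct.tmul_neg,
      sub_neg_eq_add]

/-- The substitution of an operator `E` for `λ`, sending `∑ₙ uₙ λⁿ` and `m` to `∑ₙ uₙ ⊗ Eⁿ m`. -/
noncomputable def evalAt (E : Module.End F X) : (ℕ →₀ A) →ₗ[F] X →ₗ[F] A ⊗[F] X :=
  Finsupp.lsum F fun n ↦ (TensorProduct.mk F A X).compl₂ (E ^ n)

lemma evalAt_apply (E : Module.End F X) (f : ℕ →₀ A) (m : X) :
    evalAt E f m = f.sum fun n u ↦ u ⊗ₜ (E ^ n) m := by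
  simp [evalAt, Finsupp.sum]

lemma evalAt_mapDomain_succ (E : Module.End F X) (f : ℕ →₀ A) (m : X) :
    evalAt E (f.mapDomain (· + 1)) m = evalAt E f (E m) := by
  rw [evalAt_apply, evalAt_apply, Finsupp.sum_mapDomain_index (by simp)
    (by simp [TensorProduct.add_tmul])]
  simp only [pow_succ, Module.End.mul_apply]

lemma lTensor_evalAt {E : Module.End F X} {E' : Module.End F Y} {G : X →ₗ[F] Y}
    (h : G ∘ₗ E = E' ∘ₗ G) (f : ℕ →₀ A) (m : X) :
    G.lTensor A (evalAt E f m) = evalAt E' f (G m) := by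
  rw [evalAt_apply, evalAt_apply, Finsupp.sum, map_sum]
  refine Finset.sum_congr rfl fun n _ ↦ ?_
  rw [LinearMap.lTensor_tmul, ← LinearMap.comp_apply,
    ← Module.End.commute_pow_left_of_commute h.symm, LinearMap.comp_apply]

lemma tensorD_evalAt (D : Module.End F A) {E G : Module.End F X} (h : Commute G E) (f : ℕ →₀ A)
    (m : X) :
    tensorD D G (evalAt E f m) = evalAt E (f.mapRange D (map_zero D)) m + evalAt E f (G m) := by
  rw [tensorD, LinearMap.add_apply, lTensor_evalAt h.eq, add_left_inj, evalAt_apply,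
    evalAt_apply, Finsupp.sum_mapRange_index (by simp), Finsupp.sum, map_sum]
  rfl

end TensorQuotient

section Coefficients

variable {F : Type*} [Field F] {A M P : Type*} [AddCommGroup A] [Module F A] [AddCommGroup M]
  [Module F M] [AddCommGroup P] [Module F P] {L : LCA F A}

/-- A bilinear map with polynomial values `∑ₙ (f a m n) λⁿ`, with these values bundled. -/
noncomputable def toFinsupp₂ (f : A →ₗ[F] M →ₗ[F] ℕ → P)
    (hf : ∀ a m, (Function.support (f a m)).Finite) : A →ₗ[F] M →ₗ[F] ℕ →₀ P :=
  LinearMap.mk₂ F (fun a m ↦ Finsupp.ofSupportFinite (f a m) (hf a m))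
    (fun _ _ _ ↦ by ext; simp [Finsupp.ofSupportFinite_coe])
    (fun _ _ _ ↦ by ext; simp [Finsupp.ofSupportFinite_coe])
    (fun _ _ _ ↦ by ext; simp [Finsupp.ofSupportFinite_coe])
    (fun _ _ _ ↦ by ext; simp [Finsupp.ofSupportFinite_coe])

@[simp]
lemma toFinsupp₂_apply (f : A →ₗ[F] M →ₗ[F] ℕ → P)
    (hf : ∀ a m, (Function.support (f a m)).Finite) (a : A) (m : M) (n : ℕ) :
    toFinsupp₂ f hf a m n = f a m n :=
  rfl

lemma mapDomain_succ_apply (f : ℕ →₀ P) (n : ℕ) :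
    f.mapDomain (· + 1) n = if n = 0 then 0 else f (n - 1) := by
  obtain _ | n := n
  · exact Finsupp.mapDomain_of_notMem_range _ _ (by simp)
  · exact Finsupp.mapDomain_apply (add_left_injective 1) _ _

variable (L) in
/-- The `λ`-bracket of `L`, with values bundled as polynomials. -/
noncomputable def brPoly : A →ₗ[F] A →ₗ[F] ℕ →₀ A :=
  toFinsupp₂ L.br L.br_fin

lemma brPoly_D_left (a b : A) : brPoly L (L.D a) b = -(brPoly L a b).mapDomain (· + 1) := by
  ext (_ | n) <;> simp [brPoly, mapDomain_succ_apply, L.sesq_left_zero, L.sesq_left]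

lemma brPoly_D_right (a b : A) :
    brPoly L a (L.D b)
      = (brPoly L a b).mapRange L.D (map_zero _) + (brPoly L a b).mapDomain (· + 1) := by
  ext n
  simp [brPoly, mapDomain_succ_apply, L.sesq_right]

/-- The `λ`-action of `L` on `R`, with values bundled as polynomials. -/
noncomputable def actPoly (R : LCAMod F L M) : A →ₗ[F] M →ₗ[F] ℕ →₀ M :=
  toFinsupp₂ R.act R.act_fin

lemma actPoly_D_left (R : LCAMod F L M) (a : A) (m : M) :
    actPoly R (L.D a) m = -(actPoly R a m).mapDomain (· + 1) := by
  ext (_ | n) <;> simp [actPoly, mapDomain_succ_apply, R.sesq_left_zero, R.sesq_left]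

lemma actPoly_D_right (R : LCAMod F L M) (a : A) (m : M) :
    actPoly R a (R.D m)
      = (actPoly R a m).mapRange R.D (map_zero _) + (actPoly R a m).mapDomain (· + 1) := by
  ext n
  simp [actPoly, mapDomain_succ_apply, R.sesq_right]

end Coefficients

section Bracket

open scoped TensorProduct

variable {F : Type*} [Field F] {A X Y : Type*} [AddCommGroup A] [Module F A]
  [AddCommGroup X] [Module F X] [AddCommGroup Y] [Module F Y] {L : LCA F A}

/-- A space `X` of coefficients for one-chains of `L`: `D` is the action of `∂`, for which `mul` is
a product and `pair a m n` plays the role of `⟨m, a_λ n⟩`. Both `C₁` (with `X = M`) and `Γ̃₁` (with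
`X = M[[x]]`) are of the form `(A ⊗ X)/∂(A ⊗ X)`, with brackets given by the same formula. -/
structure ChainCoeffs (L : LCA F A) (X : Type*) [AddCommGroup X] [Module F X] where
  D : Module.End F X
  mul : X →ₗ[F] X →ₗ[F] X
  pair : A →ₗ[F] X →ₗ[F] X →ₗ[F] X
  D_mul : ∀ m n, D (mul m n) = mul (D m) n + mul m (D n)
  pair_D_left : ∀ a m n, pair (L.D a) m n = -pair a (D m) n
  D_pair : ∀ a m n, D (pair a m n) = pair a m (D n)

namespace ChainCoeffs

variable (C : ChainCoeffs L X) (C' : ChainCoeffs L Y)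

/-- The space `(A ⊗ X)/∂(A ⊗ X)` of one-chains. -/
abbrev Chains : Type _ := (A ⊗[F] X) ⧸ (tensorD L.D C.D).range

/-- The term `[a_{∂₁} b] ⊗ mn` of the bracket of `a ⊗ m` and `b ⊗ n`, where `∂₁` acts on `m`. -/
noncomputable def brTerm : A ⊗[F] X →ₗ[F] A ⊗[F] X →ₗ[F] A ⊗[F] X :=
  (TensorProduct.map₂ (brPoly L) (TensorProduct.mk F X X)).compr₂
    ((TensorProduct.lift C.mul).lTensor A ∘ₗ TensorProduct.lift (evalAt (C.D.rTensor X)))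

/-- The term `b ⊗ ⟨m, a_λ n⟩` of the bracket of `a ⊗ m` and `b ⊗ n`. -/
noncomputable def pairTerm : A ⊗[F] X →ₗ[F] A ⊗[F] X →ₗ[F] A ⊗[F] X :=
  TensorProduct.lift (C.pair.compr₂ (LinearMap.lTensorHom A))

/-- The bracket of one-chains, before passing to the quotient. -/
noncomputable def preBracket : A ⊗[F] X →ₗ[F] A ⊗[F] X →ₗ[F] A ⊗[F] X :=
  C.brTerm - C.pairTerm.flip + C.pairTerm

lemma brTerm_tmul (a b : A) (m n : X) :
    C.brTerm (a ⊗ₜ m) (b ⊗ₜ n) = (TensorProduct.lift C.mul).lTensor A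
      (evalAt (C.D.rTensor X) (brPoly L a b) (m ⊗ₜ n)) :=
  rfl

lemma brTerm_tmul_eq_sum (a b : A) (m n : X) :
    C.brTerm (a ⊗ₜ m) (b ⊗ₜ n)
      = (brPoly L a b).sum fun p u ↦ u ⊗ₜ C.mul ((C.D ^ p) m) n := by
  rw [brTerm_tmul, evalAt_apply, Finsupp.sum, map_sum]
  simp [LinearMap.rTensor_pow, Finsupp.sum]

lemma pairTerm_tmul (a b : A) (m n : X) :
    C.pairTerm (a ⊗ₜ m) (b ⊗ₜ n) = b ⊗ₜ C.pair a m n :=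
  rfl

lemma brTerm_tensorD_left (x y : A ⊗[F] X) : C.brTerm (tensorD L.D C.D x) y = 0 := by
  suffices h : C.brTerm ∘ₗ tensorD L.D C.D = 0 from LinearMap.congr_fun₂ h x y
  ext a m b n
  simp [brTerm_tmul, brPoly_D_left, evalAt_mapDomain_succ]

lemma brTerm_tensorD_right (x y : A ⊗[F] X) :
    C.brTerm x (tensorD L.D C.D y) = tensorD L.D C.D (C.brTerm x y) := by
  suffices h : C.brTerm.compl₂ (tensorD L.D C.D) = C.brTerm.compr₂ (tensorD L.D C.D) from
    LinearMap.congr_fun₂ h x y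
  ext a m b n
  have hmul (t : A ⊗[F] (X ⊗[F] X)) :
      tensorD L.D C.D ((TensorProduct.lift C.mul).lTensor A t)
        = (TensorProduct.lift C.mul).lTensor A (tensorD L.D (tensorD C.D C.D) t) := by
    suffices h : tensorD L.D C.D ∘ₗ (TensorProduct.lift C.mul).lTensor A
        = (TensorProduct.lift C.mul).lTensor A ∘ₗ tensorD L.D (tensorD C.D C.D) from
      LinearMap.congr_fun h t
    ext a m n
    simp [C.D_mul]
  have hcomm : Commute (tensorD C.D C.D) (C.D.rTensor X) := TensorProduct.ext' fun m n ↦ rfl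
  simp [brTerm_tmul, brPoly_D_right, evalAt_mapDomain_succ, hmul, tensorD_evalAt _ hcomm, add_assoc]

lemma pairTerm_tensorD_left (x y : A ⊗[F] X) : C.pairTerm (tensorD L.D C.D x) y = 0 := by
  suffices h : C.pairTerm ∘ₗ tensorD L.D C.D = 0 from LinearMap.congr_fun₂ h x y
  ext a m b n
  simp [pairTerm_tmul, C.pair_D_left, TensorProduct.tmul_neg]

lemma pairTerm_tensorD_right (x y : A ⊗[F] X) :
    C.pairTerm x (tensorD L.D C.D y) = tensorD L.D C.D (C.pairTerm x y) := by
  suffices h : C.pairTerm.compl₂ (tensorD L.D C.D) = C.pairTerm.compr₂ (tensorD L.D C.D) from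
    LinearMap.congr_fun₂ h x y
  ext a m b n
  simp [pairTerm_tmul, C.D_pair]

lemma preBracket_tensorD_left (x y : A ⊗[F] X) :
    C.preBracket (tensorD L.D C.D x) y = tensorD L.D C.D (-C.pairTerm y x) := by
  simp [preBracket, brTerm_tensorD_left, pairTerm_tensorD_left, pairTerm_tensorD_right]

lemma preBracket_tensorD_right (x y : A ⊗[F] X) :
    C.preBracket x (tensorD L.D C.D y)
      = tensorD L.D C.D (C.brTerm x y + C.pairTerm x y) := by
  simp [preBracket, brTerm_tensorD_right, pairTerm_tensorD_left, pairTerm_tensorD_right]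

/-- The bracket of one-chains. -/
noncomputable def bracket : C.Chains →ₗ[F] C.Chains →ₗ[F] C.Chains :=
  (C.preBracket.compr₂ (tensorD L.D C.D).range.mkQ).liftQ₂ _ _
    (by
      rintro _ ⟨x, rfl⟩
      refine LinearMap.ext fun y ↦ ?_
      exact (Submodule.Quotient.mk_eq_zero _).2 ⟨_, (C.preBracket_tensorD_left x y).symm⟩)
    (by
      rintro _ ⟨y, rfl⟩
      refine LinearMap.ext fun x ↦ ?_
      exact (Submodule.Quotient.mk_eq_zero _).2 ⟨_, (C.preBracket_tensorD_right x y).symm⟩)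

lemma bracket_mk (x y : A ⊗[F] X) :
    C.bracket (Submodule.Quotient.mk x) (Submodule.Quotient.mk y)
      = Submodule.Quotient.mk (C.preBracket x y) :=
  rfl

variable {C C'} in
lemma preBracket_lTensor {G : X →ₗ[F] Y} (hD : G ∘ₗ C.D = C'.D ∘ₗ G)
    (hmul : ∀ m n, G (C.mul m n) = C'.mul (G m) (G n))
    (hpair : ∀ a m n, G (C.pair a m n) = C'.pair a (G m) (G n)) (x y : A ⊗[F] X) :
    G.lTensor A (C.preBracket x y) = C'.preBracket (G.lTensor A x) (G.lTensor A y) := by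
  suffices h : C.preBracket.compr₂ (G.lTensor A)
      = C'.preBracket.compl₁₂ (G.lTensor A) (G.lTensor A) from LinearMap.congr_fun₂ h x y
  ext a m b n
  have hpow (p : ℕ) (m : X) : G ((C.D ^ p) m) = (C'.D ^ p) (G m) :=
    (LinearMap.congr_fun (Module.End.commute_pow_left_of_commute hD.symm p) m).symm
  simp [preBracket, brTerm_tmul_eq_sum, pairTerm_tmul, Finsupp.sum, hmul, hpair, hpow]

end ChainCoeffs

end Bracket

/-! ### The morphism `χ₁` -/

lemma finsupp_sum_eq_finsum {ι X Y : Type*} [Zero X] [AddCommMonoid Y] {g : ι → X → Y}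
    (hg : ∀ i, g i 0 = 0) (f : ι →₀ X) : f.sum g = ∑ᶠ i, g i (f i) := by
  refine (finsum_eq_sum_of_support_subset _ fun i hi ↦ ?_).symm
  contrapose! hi
  simp [Finsupp.notMem_support_iff.1 hi, hg]

section PowerSeries

variable {F : Type*} [Field F] {N : Type*} [CommRing N] [Algebra F N]

variable (F) in
/-- The product of the power series `∑ₖ (m k) xᵏ` and `∑ₖ (n k) xᵏ`. -/
noncomputable def conv : (ℕ → N) →ₗ[F] (ℕ → N) →ₗ[F] ℕ → N :=
  LinearMap.mk₂ F (fun m n k ↦ ∑ i ∈ Finset.range (k + 1), m i * n (k - i))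
    (fun _ _ _ ↦ by funext; simp [add_mul, Finset.sum_add_distrib])
    (fun _ _ _ ↦ by funext; simp [Finset.smul_sum])
    (fun _ _ _ ↦ by funext; simp [mul_add, Finset.sum_add_distrib])
    (fun _ _ _ ↦ by funext; simp [Finset.smul_sum])

lemma conv_apply (m n : ℕ → N) (k : ℕ) :
    conv F m n k = ∑ i ∈ Finset.range (k + 1), m i * n (k - i) :=
  rfl

lemma mk_conv (m n : ℕ → N) :
    PowerSeries.mk (conv F m n) = PowerSeries.mk m * PowerSeries.mk n := by
  ext k
  simp [PowerSeries.coeff_mul, conv_apply,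
    Finset.Nat.sum_antidiagonal_eq_sum_range_succ fun i j ↦ m i * n j]

lemma derX_apply (m : ℕ → N) (k : ℕ) : derX F m k = (k + 1 : F) • m (k + 1) :=
  rfl

lemma mk_derX (m : ℕ → N) :
    PowerSeries.mk (derX F m) = PowerSeries.derivative N (PowerSeries.mk m) := by
  ext k
  simp [PowerSeries.coeff_derivative, derX_apply, Algebra.smul_def, mul_comm]

lemma derX_conv (m n : ℕ → N) :
    derX F (conv F m n) = conv F (derX F m) n + conv F m (derX F n) := by
  suffices h : PowerSeries.mk (derX F (conv F m n))
      = PowerSeries.mk (conv F (derX F m) n) + PowerSeries.mk (conv F m (derX F n)) by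
    exact funext fun k ↦ by simpa using congrArg (PowerSeries.coeff k) h
  simp only [mk_derX, mk_conv, Derivation.leibniz, smul_eq_mul]
  ring

lemma derX_pow_apply (m : ℕ → N) (p k : ℕ) :
    (derX F ^ p) m k = (k + p).descFactorial p • m (k + p) := by
  induction p generalizing m with
  | zero => simp
  | succ p ih =>
    rw [pow_succ, Module.End.mul_apply, ih, derX_apply, ← add_assoc, Nat.succ_descFactorial_succ,
      mul_comm, mul_smul, ← Nat.cast_succ, Nat.cast_smul_eq_nsmul]

lemma conv_derX_pow (m n : ℕ → N) (p : ℕ) : conv F ((derX F ^ p) m) n = g1ser m n p := by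
  funext k
  simp only [conv_apply, derX_pow_apply, g1ser]

variable (F) in
/-- The pairing of power series and polynomials in `λ`, for which `⟨x^p, λ^q⟩ = q! δ_{p,q}`. -/
noncomputable def pairing : (ℕ →₀ N) →ₗ[F] (ℕ → N) →ₗ[F] N :=
  Finsupp.lsum F fun q ↦ (q.factorial : F) • (LinearMap.mul F N).compl₂ (LinearMap.proj q)

lemma pairing_apply (f : ℕ →₀ N) (m : ℕ → N) :
    pairing F f m = f.sum fun q u ↦ (q.factorial : F) • (u * m q) := by
  simp [pairing, Finsupp.sum]

lemma pairing_mapDomain_succ (f : ℕ →₀ N) (m : ℕ → N) :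
    pairing F (f.mapDomain (· + 1)) m = pairing F f (derX F m) := by
  rw [pairing_apply, pairing_apply, Finsupp.sum_mapDomain_index (by simp)
    (by simp [add_mul])]
  refine Finsupp.sum_congr fun q _ ↦ ?_
  rw [derX_apply, mul_smul_comm, smul_smul, Nat.factorial_succ, mul_comm (q + 1), Nat.cast_mul,
    Nat.cast_succ]

lemma map_pairing {D : N →ₗ[F] N} (hD : ∀ m n, D (m * n) = D m * n + m * D n) (f : ℕ →₀ N)
    (m : ℕ → N) :
    D (pairing F f m)
      = pairing F (f.mapRange D (map_zero D)) m + pairing F f (D.compLeft ℕ m) := by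
  rw [pairing_apply, pairing_apply, pairing_apply, Finsupp.sum_mapRange_index (by simp)]
  simp [Finsupp.sum, hD, smul_add, Finset.sum_add_distrib]

end PowerSeries

section Exponential

variable {F : Type*} [Field F] {A N : Type*} [AddCommGroup A] [Module F A] [CommRing N]
  [Algebra F N] {L : LCA F A} (R : LCAMod F L N)

lemma expSer_apply (m : N) (k : ℕ) : expSer F R m k = (k.factorial : F)⁻¹ • (R.D ^ k) m :=
  rfl

lemma expSer_D (m : N) : expSer F R (R.D m) = R.D.compLeft ℕ (expSer F R m) := by
  funext k
  simp [expSer_apply, ← Module.End.mul_apply, ← pow_succ, ← pow_succ']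

variable [CharZero F]

lemma derX_expSer (m : N) : derX F (expSer F R m) = expSer F R (R.D m) := by
  funext k
  have hk : (k + 1 : F) ≠ 0 := Nat.cast_add_one_ne_zero k
  rw [derX_apply, expSer_apply, expSer_apply, smul_smul, pow_succ, Module.End.mul_apply,
    Nat.factorial_succ, Nat.cast_mul, Nat.cast_succ, mul_inv, mul_inv_cancel_left₀ hk]

variable {R} in
lemma eq_expSer_of_derX_eq {f : ℕ → N} (h : derX F f = R.D.compLeft ℕ f) :
    f = expSer F R (f 0) := by
  funext k
  induction k with
  | zero => simp [expSer_apply]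
  | succ k ih =>
    have hk : (k + 1 : F) ≠ 0 := Nat.cast_add_one_ne_zero k
    refine smul_right_injective N hk ?_
    change derX F f k = derX F (expSer F R (f 0)) k
    rw [h, derX_expSer, expSer_D]
    exact congrArg R.D ih

lemma exact_expSer : Function.Exact (expSer F R) (coefD F R - derX F (N := N)) := by
  refine fun f ↦ ⟨fun hf ↦ ⟨f 0, (eq_expSer_of_derX_eq (sub_eq_zero.1 hf).symm).symm⟩, ?_⟩
  rintro ⟨m, rfl⟩
  rw [LinearMap.sub_apply, derX_expSer, expSer_D]
  exact sub_self _

variable {R} in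
lemma expSer_mul (hD : ∀ m n, R.D (m * n) = R.D m * n + m * R.D n) (m n : N) :
    expSer F R (m * n) = conv F (expSer F R m) (expSer F R n) := by
  have h : derX F (conv F (expSer F R m) (expSer F R n))
      = R.D.compLeft ℕ (conv F (expSer F R m) (expSer F R n)) := by
    funext k
    simp [derX_conv, derX_expSer, expSer_D, conv_apply, hD, Finset.sum_add_distrib]
  rw [eq_expSer_of_derX_eq h]
  simp [conv_apply, expSer_apply]

end Exponential

section Chains

open scoped TensorProduct

variable {F : Type*} [Field F] {A N : Type*} [AddCommGroup A] [Module F A] [CommRing N]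
  [Algebra F N] {L : LCA F A} (R : LCAMod F L N)

/-- The pairing `⟨m(x), a_λ n⟩`. -/
noncomputable def actPair : A →ₗ[F] (ℕ → N) →ₗ[F] N →ₗ[F] N :=
  LinearMap.lflip.toLinearMap ∘ₗ (actPoly R).compr₂ (pairing F)

lemma actPair_apply (a : A) (m : ℕ → N) (n : N) :
    actPair R a m n = pairing F (actPoly R a n) m :=
  rfl

lemma actPair_eq_finsum (a : A) (m : ℕ → N) (n : N) :
    actPair R a m n = ∑ᶠ q, (q.factorial : F) • (m q * R.act a n q) := by
  rw [actPair_apply, pairing_apply, finsupp_sum_eq_finsum (by simp)]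
  simp [actPoly, mul_comm]

lemma actPair_D_left (a : A) (m : ℕ → N) (n : N) :
    actPair R (L.D a) m n = -actPair R a (derX F m) n := by
  simp [actPair_apply, actPoly_D_left, pairing_mapDomain_succ]

variable {R} in
lemma map_actPair (hD : ∀ m n, R.D (m * n) = R.D m * n + m * R.D n) (a : A) (m : ℕ → N) (n : N) :
    R.D (actPair R a m n)
      = actPair R a (R.D.compLeft ℕ m - derX F m) n + actPair R a m (R.D n) := by
  rw [map_sub, LinearMap.sub_apply]
  simp only [actPair_apply, map_pairing hD, actPoly_D_right, map_add, LinearMap.add_apply,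
    pairing_mapDomain_succ]
  abel

/-- The coefficients `M[[x]]` of `Γ̃₁`. -/
noncomputable def gammaCoeffs : ChainCoeffs L (ℕ → N) where
  D := derX F
  mul := conv F
  pair := LinearMap.mk₂ F (fun a m ↦ (actPair R a m).compLeft ℕ)
    (fun _ _ _ ↦ by ext; simp) (fun _ _ _ ↦ by ext; simp)
    (fun _ _ _ ↦ by ext; simp) (fun _ _ _ ↦ by ext; simp)
  D_mul := derX_conv
  pair_D_left a m n := by
    funext k
    exact actPair_D_left R a m (n k)
  D_pair a m n := by
    funext k
    exact (map_smul (actPair R a m) (k + 1 : F) (n (k + 1))).symm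

variable {R} in
/-- The coefficients `M` of `C₁`. -/
noncomputable def c1Coeffs [CharZero F] (hD : ∀ m n, R.D (m * n) = R.D m * n + m * R.D n) :
    ChainCoeffs L N where
  D := R.D
  mul := LinearMap.mul F N
  pair := (actPair R).compl₁₂ LinearMap.id (expSer F R)
  D_mul := hD
  pair_D_left a m n := by simp [actPair_D_left, derX_expSer]
  D_pair a m n := by simp [map_actPair hD, derX_expSer, expSer_D]

lemma gammaCoeffs_brTerm_tmul (a b : A) (m n : ℕ → N) :
    (gammaCoeffs R).brTerm (a ⊗ₜ m) (b ⊗ₜ n) = ∑ᶠ p, L.br a b p ⊗ₜ[F] g1ser m n p := by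
  rw [ChainCoeffs.brTerm_tmul_eq_sum, finsupp_sum_eq_finsum (by simp)]
  exact finsum_congr fun p ↦ congrArg (L.br a b p ⊗ₜ[F] ·) (conv_derX_pow m n p)

lemma gammaCoeffs_preBracket_tmul (a b : A) (m n : ℕ → N) :
    (gammaCoeffs R).preBracket (a ⊗ₜ m) (b ⊗ₜ n) = brkGen F R a m b n := by
  have hpair (m : ℕ → N) (b : A) (n : ℕ → N) : (gammaCoeffs R).pair b m n = pairSer F R m b n :=
    funext fun k ↦ actPair_eq_finsum R b m (n k)
  simp only [brkGen, ← hpair, ← gammaCoeffs_brTerm_tmul R]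
  rfl

variable {R} in
lemma c1Coeffs_preBracket_tmul [CharZero F]
    (hD : ∀ m n, R.D (m * n) = R.D m * n + m * R.D n) (a b : A) (m n : N) :
    (c1Coeffs hD).preBracket (a ⊗ₜ m) (b ⊗ₜ n) = brkC1Gen F R a m b n := by
  have hbr : (c1Coeffs hD).brTerm (a ⊗ₜ m) (b ⊗ₜ n)
      = ∑ᶠ p, L.br a b p ⊗ₜ[F] ((R.D ^ p) m * n) := by
    rw [ChainCoeffs.brTerm_tmul_eq_sum, finsupp_sum_eq_finsum (by simp)]
    rfl
  have hpair (m : N) (b : A) (n : N) :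
      (c1Coeffs hD).pair b m n = ∑ᶠ q, R.act b n q * (R.D ^ q) m := by
    refine (actPair_eq_finsum R b _ n).trans (finsum_congr fun q ↦ ?_)
    have hq : (q.factorial : F) ≠ 0 := Nat.cast_ne_zero.2 q.factorial_ne_zero
    rw [expSer_apply, smul_mul_assoc, smul_inv_smul₀ hq, mul_comm]
  simp only [brkC1Gen, ← hpair, ← hbr, add_sub_right_comm]
  rfl

variable {R} in
lemma chi1Raw_preBracket [CharZero F] (hD : ∀ m n, R.D (m * n) = R.D m * n + m * R.D n)
    (x y : A ⊗[F] N) :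
    chi1Raw F R ((c1Coeffs hD).preBracket x y)
      = (gammaCoeffs R).preBracket (chi1Raw F R x) (chi1Raw F R y) := by
  have hpair (a : A) (m n : N) : expSer F R ((c1Coeffs hD).pair a m n)
      = (gammaCoeffs R).pair a (expSer F R m) (expSer F R n) := by
    have hcomm : Commute R.D ((c1Coeffs hD).pair a m) :=
      LinearMap.ext ((c1Coeffs hD).D_pair a m)
    funext k
    exact (congrArg ((k.factorial : F)⁻¹ • ·) (LinearMap.congr_fun (hcomm.pow_left k).eq n)).trans
      (map_smul (actPair R a (expSer F R m)) _ _).symm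
  exact ChainCoeffs.preBracket_lTensor (C := c1Coeffs hD) (C' := gammaCoeffs R)
    (LinearMap.ext fun m ↦ (derX_expSer R m).symm) (expSer_mul hD) hpair x y

lemma chi1Raw_c1Rel [CharZero F] (t : A ⊗[F] N) :
    chi1Raw F R (c1Rel F L R t) = chainRel F L N (chi1Raw F R t) := by
  suffices h : chi1Raw F R ∘ₗ c1Rel F L R = chainRel F L N ∘ₗ chi1Raw F R from
    LinearMap.congr_fun h t
  ext a m
  simp [chi1Raw, c1Rel, chainRel, derX_expSer]

lemma chainPartial_chi1Raw [CharZero F] (t : A ⊗[F] N) : chainPartial F R (chi1Raw F R t) = 0 := by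
  rw [chainPartial, chi1Raw, ← LinearMap.comp_apply, ← LinearMap.lTensor_comp,
    (exact_expSer R).linearMap_comp_eq_zero, LinearMap.lTensor_zero, LinearMap.zero_apply]

/-- The map `χ₁ : C₁ → Γ̃₁`. -/
noncomputable def chi1 [CharZero F] : C1Q F L R →ₗ[F] Gamma1 F L N :=
  (c1Rel F L R).range.mapQ (chainRel F L N).range (chi1Raw F R) <| by
    rintro _ ⟨t, rfl⟩
    exact ⟨_, (chi1Raw_c1Rel R t).symm⟩

lemma chi1_mk [CharZero F] (t : A ⊗[F] N) :
    chi1 R (Submodule.Quotient.mk t) = Submodule.Quotient.mk (chi1Raw F R t) :=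
  rfl

variable {R} in
lemma chi1_bracket [CharZero F] (hD : ∀ m n, R.D (m * n) = R.D m * n + m * R.D n)
    (x y : C1Q F L R) :
    chi1 R ((c1Coeffs hD).bracket x y) = (gammaCoeffs R).bracket (chi1 R x) (chi1 R y) := by
  obtain ⟨x, rfl⟩ := Submodule.Quotient.mk_surjective _ x
  obtain ⟨y, rfl⟩ := Submodule.Quotient.mk_surjective _ y
  exact congrArg Submodule.Quotient.mk (chi1Raw_preBracket hD x y)

end Chains

/-! ### Kernel and image of `χ₁` -/

section Duality

variable {F : Type*} [Field F] {N : Type*} [CommRing N] [Algebra F N]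

/-- The power series `∑ₖ ((-1)ᵏ / k!) φ(Xᵏ) xᵏ` attached to a functional `φ` on `F[X]`. It is
normalized so that `-∂ₓ` is dual to the multiplication by `X`. -/
noncomputable def dualSeries : (Polynomial F →ₗ[F] N) →ₗ[F] ℕ → N :=
  LinearMap.pi fun k ↦ ((-1) ^ k * (k.factorial : F)⁻¹) • LinearMap.applyₗ (Polynomial.X ^ k)

lemma dualSeries_apply (φ : Polynomial F →ₗ[F] N) (k : ℕ) :
    dualSeries φ k = ((-1) ^ k * (k.factorial : F)⁻¹) • φ (Polynomial.X ^ k) :=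
  rfl

variable [CharZero F]

lemma dualSeries_surjective : Function.Surjective (dualSeries (F := F) (N := N)) := by
  intro m
  refine ⟨(Polynomial.basisMonomials F).constr F fun k ↦ ((-1) ^ k * (k.factorial : F)) • m k,
    funext fun k ↦ ?_⟩
  have hk : (k.factorial : F) ≠ 0 := Nat.cast_ne_zero.2 k.factorial_ne_zero
  have hX : Polynomial.X ^ k = Polynomial.basisMonomials F k := by
    simp [Polynomial.X_pow_eq_monomial]
  rw [dualSeries_apply, hX, Module.Basis.constr_basis, smul_smul, mul_mul_mul_comm, ← mul_pow,
    inv_mul_cancel₀ hk]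
  simp

lemma neg_derX_dualSeries (φ : Polynomial F →ₗ[F] N) :
    (-derX F) (dualSeries φ) = dualSeries (φ ∘ₗ LinearMap.mul F (Polynomial F) Polynomial.X) := by
  funext k
  have hk : (k + 1 : F) ≠ 0 := Nat.cast_add_one_ne_zero k
  rw [LinearMap.neg_apply, Pi.neg_apply, derX_apply, dualSeries_apply, dualSeries_apply, smul_smul,
    ← neg_smul, LinearMap.comp_apply, LinearMap.mul_apply', ← pow_succ', Nat.factorial_succ]
  congr 1
  push_cast
  field_simp
  ring

lemma aeval_neg_derX_dualSeries (p : Polynomial F) (φ : Polynomial F →ₗ[F] N) :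
    Polynomial.aeval (-derX F) p (dualSeries φ)
      = dualSeries (φ ∘ₗ LinearMap.mul F (Polynomial F) p) := by
  induction p using Polynomial.induction_on generalizing φ with
  | C r =>
    have hr : LinearMap.mul F (Polynomial F) (Polynomial.C r) = r • LinearMap.id :=
      LinearMap.ext fun q ↦ (Polynomial.smul_eq_C_mul r).symm
    rw [hr, LinearMap.comp_smul, map_smul, LinearMap.comp_id, Polynomial.aeval_C,
      Module.algebraMap_end_apply]
  | add p q hp hq =>
    simp only [map_add, LinearMap.add_apply, hp, hq, LinearMap.comp_add]
  | monomial n r ih =>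
    have hmul : LinearMap.mul F (Polynomial F) (Polynomial.C r * Polynomial.X ^ n * Polynomial.X)
        = LinearMap.mul F _ Polynomial.X ∘ₗ LinearMap.mul F _ (Polynomial.C r * Polynomial.X ^ n) :=
      LinearMap.ext fun q ↦ by simp only [LinearMap.comp_apply, LinearMap.mul_apply']; ring
    rw [pow_succ, ← mul_assoc, map_mul (Polynomial.aeval (-derX F)), Module.End.mul_apply,
      Polynomial.aeval_X, neg_derX_dualSeries, ih, LinearMap.comp_assoc, ← hmul]

lemma aeval_neg_derX_surjective {p : Polynomial F} (hp : p ≠ 0) :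
    Function.Surjective (Polynomial.aeval (-derX F (N := N)) p) := by
  intro m
  obtain ⟨φ, rfl⟩ := dualSeries_surjective (F := F) m
  obtain ⟨r, hr⟩ := (LinearMap.mul F (Polynomial F) p).exists_leftInverse_of_injective
    (LinearMap.ker_eq_bot.2 (mul_right_injective₀ hp))
  exact ⟨dualSeries (φ ∘ₗ r), by
    rw [aeval_neg_derX_dualSeries, LinearMap.comp_assoc, hr, LinearMap.comp_id]⟩

end Duality

section NormalForm

open scoped TensorProduct

variable {F : Type*} [Field F] {A X Y : Type*} [AddCommGroup A] [Module F A]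
  [AddCommGroup X] [Module F X] [AddCommGroup Y] [Module F Y] {L : LCA F A} {π : A →ₗ[F] ℕ →₀ A}

variable (L) in
/-- The subspace of one-chains spanned by the classes of `t ⊗ m` with `t` a torsion element. -/
noncomputable def torsionChains (E : Module.End F X) :
    Submodule F ((A ⊗[F] X) ⧸ (tensorD L.D E).range) :=
  Submodule.span F {z | ∃ t m, IsTor L t ∧ z = Submodule.Quotient.mk (t ⊗ₜ[F] m)}

variable (π) in
/-- The map `∑ₙ ∂ⁿ uₙ ⊗ m ↦ ∑ₙ uₙ ⊗ (-E)ⁿ m`, where the `uₙ` are the coefficients of `π`. It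
selects a representative of a one-chain, up to torsion. -/
noncomputable def normalForm (E : Module.End F X) : A ⊗[F] X →ₗ[F] A ⊗[F] X :=
  TensorProduct.lift (evalAt (-E) ∘ₗ π)

lemma normalForm_tmul (E : Module.End F X) (a : A) (m : X) :
    normalForm π E (a ⊗ₜ m) = evalAt (-E) (π a) m :=
  rfl

lemma normalForm_eq_zero (hπ : IsExpansion L π) (E : Module.End F X) {t : A ⊗[F] X}
    (ht : t ∈ (tensorD L.D E).range) : normalForm π E t = 0 := by
  obtain ⟨t, rfl⟩ := ht
  suffices h : normalForm π E ∘ₗ tensorD L.D E = 0 from LinearMap.congr_fun h t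
  ext a m
  simp [normalForm_tmul, hπ.map_D, evalAt_mapDomain_succ]

lemma lTensor_normalForm {E : Module.End F X} {E' : Module.End F Y} {G : X →ₗ[F] Y}
    (h : G ∘ₗ E = E' ∘ₗ G) (t : A ⊗[F] X) :
    G.lTensor A (normalForm π E t) = normalForm π E' (G.lTensor A t) := by
  suffices h' : G.lTensor A ∘ₗ normalForm π E = normalForm π E' ∘ₗ G.lTensor A from
    LinearMap.congr_fun h' t
  ext a m
  exact lTensor_evalAt (by rw [LinearMap.comp_neg, h, LinearMap.neg_comp]) (π a) m

lemma mk_sub_mk_normalForm_mem_torsionChains (hπ : IsExpansion L π) (E : Module.End F X)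
    (t : A ⊗[F] X) :
    Submodule.Quotient.mk t - Submodule.Quotient.mk (normalForm π E t) ∈ torsionChains L E := by
  induction t with
  | zero => simp
  | add x y hx hy =>
    rw [map_add, Submodule.Quotient.mk_add, Submodule.Quotient.mk_add, add_sub_add_comm]
    exact add_mem hx hy
  | tmul a m =>
    refine Submodule.subset_span ⟨_, m, hπ.isTor_sub a, ?_⟩
    have hmk : (Submodule.Quotient.mk (evalAt (-E) (π a) m) : (A ⊗[F] X) ⧸ (tensorD L.D E).range)
        = Submodule.Quotient.mk (((π a).sum fun n u ↦ (L.D ^ n) u) ⊗ₜ m) := by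
      simp only [evalAt_apply, Finsupp.sum, TensorProduct.sum_tmul, ← Submodule.mkQ_apply, map_sum]
      refine Finset.sum_congr rfl fun n _ ↦ ?_
      simpa using (mk_aeval_tmul L.D E (Polynomial.X ^ n) (π a n) m).symm
    rw [normalForm_tmul, hmk, ← Submodule.Quotient.mk_sub, ← TensorProduct.sub_tmul]

end NormalForm

section KernelImage

open scoped TensorProduct

variable {F : Type*} [Field F] {A N : Type*} [AddCommGroup A] [Module F A] [CommRing N]
  [Algebra F N] {L : LCA F A} (R : LCAMod F L N)

lemma chi1Raw_injective : Function.Injective (chi1Raw F R) := by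
  have h : (LinearMap.proj 0).lTensor A ∘ₗ chi1Raw F R = LinearMap.id := by
    ext a m
    simp [chi1Raw, expSer_apply]
  exact Function.LeftInverse.injective (LinearMap.congr_fun h)

lemma chainPartial_normalForm (π : A →ₗ[F] ℕ →₀ A) (t : A ⊗[F] (ℕ → N)) :
    chainPartial F R (normalForm π (derX F (N := N)) t)
      = normalForm π (derX F (N := N)) (chainPartial F R t) := by
  refine lTensor_normalForm (LinearMap.ext fun f ↦ funext fun k ↦ ?_) t
  simp [coefD, derX_apply, smul_sub]

variable [CharZero F]

lemma torsionChains_derX : torsionChains L (derX F (N := N)) = ⊥ := by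
  refine Submodule.span_eq_bot.2 ?_
  rintro _ ⟨t, m, ⟨p, hp, hpt⟩, rfl⟩
  obtain ⟨f, rfl⟩ := aeval_neg_derX_surjective hp m
  rw [← mk_aeval_tmul L.D (derX F (N := N)), hpt, TensorProduct.zero_tmul,
    Submodule.Quotient.mk_zero]

lemma mk_normalForm_derX {π : A →ₗ[F] ℕ →₀ A} (hπ : IsExpansion L π) (t : A ⊗[F] (ℕ → N)) :
    (Submodule.Quotient.mk (normalForm π (derX F) t) : Gamma1 F L N) = Submodule.Quotient.mk t := by
  have h := mk_sub_mk_normalForm_mem_torsionChains hπ (derX F (N := N)) t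
  rw [torsionChains_derX, Submodule.mem_bot, sub_eq_zero] at h
  exact h.symm

lemma chi1Raw_normalForm (π : A →ₗ[F] ℕ →₀ A) (t : A ⊗[F] N) :
    chi1Raw F R (normalForm π R.D t) = normalForm π (derX F (N := N)) (chi1Raw F R t) :=
  lTensor_normalForm (LinearMap.ext fun m ↦ (derX_expSer R m).symm) t

lemma chi1_eq_zero_iff (hdec : Decomposes L) (x : C1Q F L R) :
    chi1 R x = 0 ↔ x ∈ torsionChains L R.D := by
  obtain ⟨π, hπ⟩ := hdec.exists_isExpansion
  constructor
  · obtain ⟨t, rfl⟩ := Submodule.Quotient.mk_surjective _ x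
    intro hx
    have hx' : chi1Raw F R t ∈ (chainRel F L N).range := (Submodule.Quotient.mk_eq_zero _).1 hx
    have hnf : normalForm π R.D t = 0 := by
      refine chi1Raw_injective R ?_
      rw [map_zero, chi1Raw_normalForm]
      exact normalForm_eq_zero hπ (derX F (N := N)) hx'
    have hmem := mk_sub_mk_normalForm_mem_torsionChains hπ R.D t
    rw [hnf, Submodule.Quotient.mk_zero, sub_zero] at hmem
    exact hmem
  · refine fun hx ↦ (Submodule.span_le (p := (chi1 R).ker)).2 ?_ hx
    rintro _ ⟨t, m, ht, rfl⟩
    have hmem : Submodule.Quotient.mk (t ⊗ₜ expSer F R m) ∈ torsionChains L (derX F (N := N)) :=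
      Submodule.subset_span ⟨t, _, ht, rfl⟩
    rwa [torsionChains_derX] at hmem

lemma exists_chi1_eq_mk (hdec : Decomposes L) {t : A ⊗[F] (ℕ → N)}
    (ht : chainPartial F R t ∈ (chainRel F L N).range) :
    ∃ x, chi1 R x = Submodule.Quotient.mk t := by
  obtain ⟨π, hπ⟩ := hdec.exists_isExpansion
  have hker : chainPartial F R (normalForm π (derX F (N := N)) t) = 0 := by
    rw [chainPartial_normalForm]
    exact normalForm_eq_zero hπ (derX F (N := N)) ht
  obtain ⟨y, hy⟩ := (Module.Flat.lTensor_exact A (exact_expSer R) _).1 hker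
  refine ⟨Submodule.Quotient.mk y, ?_⟩
  rw [chi1_mk, ← mk_normalForm_derX hπ t]
  exact congrArg _ hy

end KernelImage

lemma IsGamma.apply_snoc_zero {F A M : Type*} [Field F] [AddCommGroup A] [Module F A]
    [CommRing M] [Algebra F M] {L : LCA F A} {R : LCAMod F L M} {j : ℕ}
    {γ : (Fin (j + 1) → A) → (Fin (j + 1) → ℕ) → M} (h : IsGamma R (j + 1) γ) (x : Fin j → A) :
    γ (Fin.snoc x 0) = 0 := by
  simpa only [zero_smul, Fin.update_snoc_last] using h.map_smul (Fin.snoc x 0) (Fin.last j) 0 0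

open scoped TensorProduct in
theorem psi_chi_morphism_of_g_complexes_general
    {F : Type*} [Field F] [CharZero F]
    {A M : Type*} [AddCommGroup A] [Module F A] [CommRing M] [Algebra F M]
    (L : LCA F A) (R : LCAMod F L M)
    (hD : ∀ m n : M, R.D (m * n) = R.D m * n + m * R.D n) :
    (∃ (BrC : C1Q F L R →ₗ[F] C1Q F L R →ₗ[F] C1Q F L R)
       (BrG : Gamma1 F L M →ₗ[F] Gamma1 F L M →ₗ[F] Gamma1 F L M)
       (chiBar : C1Q F L R →ₗ[F] Gamma1 F L M),
      (∀ (a : A) (m : M) (b : A) (n : M),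
        BrC (Submodule.Quotient.mk (a ⊗ₜ[F] m)) (Submodule.Quotient.mk (b ⊗ₜ[F] n))
          = Submodule.Quotient.mk (brkC1Gen F R a m b n)) ∧
      (∀ (a : A) (m : ℕ → M) (b : A) (n : ℕ → M),
        BrG (Submodule.Quotient.mk (a ⊗ₜ[F] m)) (Submodule.Quotient.mk (b ⊗ₜ[F] n))
          = Submodule.Quotient.mk (brkGen F R a m b n)) ∧
      (∀ t : A ⊗[F] M,
        chiBar (Submodule.Quotient.mk t) = Submodule.Quotient.mk (chi1Raw F R t)) ∧
      (∀ x y, chiBar (BrC x y) = BrG (chiBar x) (chiBar y)) ∧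
      (∀ (DQ : Gamma1 F L M →ₗ[F] Gamma1 F L M),
        (∀ t, DQ (Submodule.Quotient.mk t)
            = Submodule.Quotient.mk (chainPartial F R t)) →
        (∀ x, DQ (chiBar x) = 0) ∧
        (Decomposes L →
          (∀ x, chiBar x = 0 ↔ x ∈ Submodule.span F
            {z : C1Q F L R | ∃ (t : A) (m : M), IsTor L t ∧
              z = Submodule.Quotient.mk (t ⊗ₜ[F] m)}) ∧
          (∀ z, DQ z = 0 → ∃ x, chiBar x = z)))) ∧
    (∀ m : M, psiRaw R (deltaRaw L R (fun (_ : Fin 0 → A) (_ : Fin 0 → ℕ) ↦ m))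
        = dZero R m) ∧
    (∀ (k : ℕ) (γ : (Fin (k + 1) → A) → (Fin (k + 1) → ℕ) → M), IsGamma R (k + 1) γ →
      psiRaw R (deltaRaw L R γ) = dRaw L R (psiRaw R γ)) ∧
    (∀ (k : ℕ) (a₀ : A) (m : M)
        (γ : (Fin (k + 2) → A) → (Fin (k + 2) → ℕ) → M), IsGamma R (k + 2) γ →
      iotaC1 F R a₀ m (psiRaw R γ)
        = psiRaw R (iota1 F a₀ (expSer F R m) γ)) ∧
    (∀ (a₀ : A) (m : M) (γ : (Fin 1 → A) → (Fin 1 → ℕ) → M), IsGamma R 1 γ →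
      ∃ w : M,
        iotaC1zero F R a₀ m (psiRaw R γ)
          - iota1 F a₀ (expSer F R m) γ (fun i ↦ i.elim0) (fun i ↦ i.elim0)
        = R.D w) ∧
    (∀ (k : ℕ) (a₀ : A) (m : M)
        (γ : (Fin (k + 2) → A) → (Fin (k + 2) → ℕ) → M), IsGamma R (k + 2) γ →
      lieC1 F R a₀ m (psiRaw R γ)
        = psiRaw R (lie1 F R a₀ (expSer F R m) γ)) ∧
    (Decomposes L →
      (∀ (k : ℕ) (c : (Fin (k + 1) → A) → (Fin k → ℕ) → M),
        IsCBr R k c → VanishOnTorsion L c →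
          ∃ γ, IsGamma R (k + 1) γ ∧ psiRaw R γ = c) ∧
      (∀ (k : ℕ) (γ θ : (Fin (k + 1) → A) → (Fin (k + 1) → ℕ) → M),
        IsGamma R (k + 1) γ → IsGamma R (k + 1) θ → psiRaw R γ = psiRaw R θ →
          ∃ η, IsGamma R (k + 1) η ∧ γ - θ = GammaD R η)) := by
  refine ⟨⟨(c1Coeffs hD).bracket, (gammaCoeffs R).bracket, chi1 R, ?_, ?_, chi1_mk R,
      chi1_bracket hD, fun DQ hDQ ↦ ⟨?_, fun hdec ↦ ⟨chi1_eq_zero_iff R hdec, ?_⟩⟩⟩,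
    psiRaw_deltaRaw_zero R, fun _ _ h ↦ psiRaw_deltaRaw h.apply_snoc_zero h.fin,
    fun _ b m _ h ↦ iotaC1_psiRaw R b m hD h.fin, fun b m _ h ↦ iotaC1zero_psiRaw R b m hD h.fin,
    fun _ b m _ h ↦ lieC1_psiRaw R b m hD h.apply_snoc_zero h.fin,
    fun hdec ↦ ⟨fun _ _ hc hv ↦ hc.exists_psiRaw_eq hv hdec,
      fun _ _ _ hγ hθ ↦ exists_sub_eq_GammaD hγ hθ⟩⟩
  · exact fun a m b n ↦ ((c1Coeffs hD).bracket_mk _ _).trans <|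
      congrArg Submodule.Quotient.mk (c1Coeffs_preBracket_tmul hD a b m n)
  · exact fun a m b n ↦ ((gammaCoeffs R).bracket_mk _ _).trans <|
      congrArg Submodule.Quotient.mk (gammaCoeffs_preBracket_tmul R a b m n)
  · intro x
    obtain ⟨t, rfl⟩ := Submodule.Quotient.mk_surjective _ x
    rw [chi1_mk, hDQ, chainPartial_chi1Raw, Submodule.Quotient.mk_zero]
  · intro z hz
    obtain ⟨t, rfl⟩ := Submodule.Quotient.mk_surjective _ z
    exact exists_chi1_eq_mk R hdec ((Submodule.Quotient.mk_eq_zero _).1 (hDQ t ▸ hz))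

end LCC

set_option maxHeartbeats 1000000

open scoped TensorProduct in
open LCC in
/-- **Statement 17.** Let `A` be a Lie conformal algebra and `M` an `A`-module with a
commutative associative product on which `∂^M` and all `a_λ` act by derivations.
The maps `ψ^• : Γ^•(A,M) → C̄^•(A,M) ⊆ C^•(A,M)` and `χ₁ : C₁(A,M) → Γ₁(A,M)` define
a morphism of `𝔤`-complexes: `χ₁` is a Lie algebra homomorphism `ΠC₁ → ΠΓ₁` (which,
when `A` decomposes, factors through a Lie algebra isomorphism `ΠC̄₁ ≅ ΠΓ₁`), and `ψ`
intertwines `δ` with `d`, the contractions, and the Lie derivatives.  If `A`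
decomposes as an `F[∂]`-module into its torsion plus a free submodule, then
`ψ^• : Γ^•(A,M) → C̄^•(A,M)` is an isomorphism of `ΠC₁ ≅ ΠΓ₁`-complexes. -/
theorem psi_chi_morphism_of_g_complexes
    {F : Type*} [Field F] [CharZero F]
    {A M : Type*} [AddCommGroup A] [Module F A] [CommRing M] [Algebra F M]
    (L : LCA F A) (R : LCAMod F L M)
    (hD : ∀ m n : M, R.D (m * n) = R.D m * n + m * R.D n)
    (hact : ∀ (a : A) (m n : M) (p : ℕ),
      R.act a (m * n) p = R.act a m p * n + m * R.act a n p) :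
    -- χ₁ : ΠC₁ → ΠΓ₁ is a Lie algebra homomorphism, and an isomorphism from ΠC̄₁
    -- when A decomposes
    (∃ (BrC : C1Q F L R →ₗ[F] C1Q F L R →ₗ[F] C1Q F L R)
       (BrG : Gamma1 F L M →ₗ[F] Gamma1 F L M →ₗ[F] Gamma1 F L M)
       (chiBar : C1Q F L R →ₗ[F] Gamma1 F L M),
      (∀ (a : A) (m : M) (b : A) (n : M),
        BrC (Submodule.Quotient.mk (a ⊗ₜ[F] m)) (Submodule.Quotient.mk (b ⊗ₜ[F] n))
          = Submodule.Quotient.mk (brkC1Gen F R a m b n)) ∧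
      (∀ (a : A) (m : ℕ → M) (b : A) (n : ℕ → M),
        BrG (Submodule.Quotient.mk (a ⊗ₜ[F] m)) (Submodule.Quotient.mk (b ⊗ₜ[F] n))
          = Submodule.Quotient.mk (brkGen F R a m b n)) ∧
      (∀ t : A ⊗[F] M,
        chiBar (Submodule.Quotient.mk t) = Submodule.Quotient.mk (chi1Raw F R t)) ∧
      -- Lie algebra homomorphism
      (∀ x y, chiBar (BrC x y) = BrG (chiBar x) (chiBar y)) ∧
      -- the image of χ₁ lies in Γ₁ = Ker ∂
      (∀ (DQ : Gamma1 F L M →ₗ[F] Gamma1 F L M),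
        (∀ t, DQ (Submodule.Quotient.mk t)
            = Submodule.Quotient.mk (chainPartial F R t)) →
        (∀ x, DQ (chiBar x) = 0) ∧
        -- under the decomposition assumption, χ₁ factors through a bijection
        -- ΠC̄₁ ≅ ΠΓ₁ : its kernel is the image of Tor(A) ⊗ M and it surjects
        -- onto Γ₁ = Ker ∂
        (Decomposes L →
          (∀ x, chiBar x = 0 ↔ x ∈ Submodule.span F
            {z : C1Q F L R | ∃ (t : A) (m : M), IsTor L t ∧
              z = Submodule.Quotient.mk (t ⊗ₜ[F] m)}) ∧
          (∀ z, DQ z = 0 → ∃ x, chiBar x = z)))) ∧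
    -- ψ intertwines the differentials: ψ∘δ = d and ψ^{k+1}∘δ = d∘ψ^k
    (∀ m : M, psiRaw R (deltaRaw L R (fun (_ : Fin 0 → A) (_ : Fin 0 → ℕ) => m))
        = dZero R m) ∧
    (∀ (k : ℕ) (γ : (Fin (k+1) → A) → (Fin (k+1) → ℕ) → M), IsGamma R (k+1) γ →
      psiRaw R (deltaRaw L R γ) = dRaw L R (psiRaw R γ)) ∧
    -- ψ intertwines the contractions: ι_x ∘ ψ = ψ ∘ ι_{χ₁(x)}
    (∀ (k : ℕ) (a₀ : A) (m : M)
        (γ : (Fin (k+2) → A) → (Fin (k+2) → ℕ) → M), IsGamma R (k+2) γ →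
      iotaC1 F R a₀ m (psiRaw R γ)
        = psiRaw R (iota1 F a₀ (expSer F R m) γ)) ∧
    (∀ (a₀ : A) (m : M) (γ : (Fin 1 → A) → (Fin 1 → ℕ) → M), IsGamma R 1 γ →
      ∃ w : M,
        iotaC1zero F R a₀ m (psiRaw R γ)
          - iota1 F a₀ (expSer F R m) γ (fun i => i.elim0) (fun i => i.elim0)
        = R.D w) ∧
    -- ψ intertwines the Lie derivatives: L_x ∘ ψ = ψ ∘ L_{χ₁(x)}
    (∀ (k : ℕ) (a₀ : A) (m : M)
        (γ : (Fin (k+2) → A) → (Fin (k+2) → ℕ) → M), IsGamma R (k+2) γ →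
      lieC1 F R a₀ m (psiRaw R γ)
        = psiRaw R (lie1 F R a₀ (expSer F R m) γ)) ∧
    -- under the decomposition assumption, ψ^• : Γ^• → C̄^• is an isomorphism of
    -- complexes (surjectivity onto C̄; injectivity = Ker ψ = ∂Γ̃)
    (Decomposes L →
      (∀ (k : ℕ) (c : (Fin (k+1) → A) → (Fin k → ℕ) → M),
        IsCBr R k c → VanishOnTorsion L c →
          ∃ γ, IsGamma R (k+1) γ ∧ psiRaw R γ = c) ∧
      (∀ (k : ℕ) (γ θ : (Fin (k+1) → A) → (Fin (k+1) → ℕ) → M),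
        IsGamma R (k+1) γ → IsGamma R (k+1) θ → psiRaw R γ = psiRaw R θ →
          ∃ η, IsGamma R (k+1) η ∧ γ - θ = GammaD R η)) :=
  psi_chi_morphism_of_g_complexes_general L R hD
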